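/- Let p_v = 2^{-𝒩_V(v)·(n+5)} for every vertex v ≠ s of 𝔅_n, and let π_0' be the twin policy of π_0. Then Dantzig(𝔇_n, π_0') performs at least 2^n − 1 improving switches before terminating. -/

import Mathlib

/-! ## The Markov decision process `𝔅_n` -/

/-- Vertices of the MDP `𝔅_n`: a transportation vertex `t`, a sink `s`, a dummy vertex `d`,
and vertices `a i`, `b i` for `i ∈ {1,…,n}`. -/
inductive BV : Type where
  | t : BV
  | s : BV
  | d : BV
  | a : ℕ → BV
  | b : ℕ → BV
deriving DecidableEq

/-- The vertex `a i` for `i ∈ {1,…,n+1}`, with the convention `a (n+1) = s`. -/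
def aN (n i : ℕ) : BV := if i = n + 1 then BV.s else BV.a i

/-- The vertex `b i` for `i ∈ {1,…,n+1}`, with the convention `b (n+1) = d`. -/
def bN (n i : ℕ) : BV := if i = n + 1 then BV.d else BV.b i

/-- The vertex set of `𝔅_n`. -/
def IsBVertex (n : ℕ) : BV → Prop
  | BV.t => True
  | BV.s => True
  | BV.d => True
  | BV.a i => 1 ≤ i ∧ i ≤ n
  | BV.b i => 1 ≤ i ∧ i ≤ n

/-- The edge relation of `𝔅_n`: travel, enter, skip, board, stay, leave edges,
the edge `(d,s)` and the self-loop `(s,s)`. -/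
def BEdge (n : ℕ) (u v : BV) : Prop :=
  (∃ i, 1 ≤ i ∧ i ≤ n ∧ u = BV.t ∧ v = BV.a i) ∨
  (∃ i, 1 ≤ i ∧ i ≤ n ∧ u = BV.a i ∧ v = BV.b i) ∨
  (∃ i, 1 ≤ i ∧ i ≤ n ∧ u = BV.a i ∧ v = aN n (i + 1)) ∨
  (∃ i, 1 ≤ i ∧ i ≤ n ∧ u = BV.a i ∧ v = BV.t) ∨
  (∃ i, 1 ≤ i ∧ i ≤ n ∧ u = BV.b i ∧ v = bN n (i + 1)) ∨
  (∃ i, 1 ≤ i ∧ i ≤ n ∧ u = BV.b i ∧ v = aN n (i + 1)) ∨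
  (u = BV.d ∧ v = BV.s) ∨ (u = BV.s ∧ v = BV.s)

/-- The reward function of `𝔅_n`: `r(enter i) = 2^i`, `r(stay i) = 3/4`,
`r(board i) = -2^i + 5/4`, and reward `0` on all other edges. -/
def rB (n : ℕ) (u v : BV) : ℚ :=
  match u, v with
  | BV.a i, BV.b j => if i = j then 2 ^ i else 0
  | BV.a i, BV.t => -(2 ^ i) + 5 / 4
  | BV.b i, BV.b j => if j = i + 1 then 3 / 4 else 0
  | BV.b i, BV.d => if i = n then 3 / 4 else 0
  | _, _ => 0

/-- A policy for `𝔅_n` chooses an outgoing edge at every vertex. -/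
def IsBPolicy (n : ℕ) (π : BV → BV) : Prop := ∀ u, IsBVertex n u → BEdge n u (π u)

/-- A policy is weak unichain if it reaches the sink `s` from every vertex. -/
def BWeakUnichain (n : ℕ) (π : BV → BV) : Prop :=
  ∀ u, IsBVertex n u → ∃ k, π^[k] u = BV.s

open Classical in
/-- The value of a vertex `v` w.r.t. a (weak unichain) policy `π`:
the sum of the rewards along the path that `π` takes from `v` to the sink `s`. -/
noncomputable def BVal (n : ℕ) (π : BV → BV) (v : BV) : ℚ :=
  if h : ∃ k, π^[k] v = BV.s then
    ∑ i ∈ Finset.range (Nat.find h), rB n (π^[i] v) (π^[i + 1] v)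
  else 0

/-- The reduced costs of the edge `(u,v)` w.r.t. the policy `π`. -/
noncomputable def zB (n : ℕ) (π : BV → BV) (u v : BV) : ℚ :=
  rB n u v + BVal n π v - BVal n π u

/-- The edge `(u,v)` is an improving switch for `π` if its reduced costs are positive. -/
def BImproving (n : ℕ) (π : BV → BV) (u v : BV) : Prop :=
  BEdge n u v ∧ 0 < zB n π u v

/-- The Bland numbering `𝒩_{𝔅_n}` of the edges of `𝔅_n`. -/
def NB (n : ℕ) (u v : BV) : ℕ :=
  match u, v with
  | BV.t, BV.a i => i
  | BV.a i, BV.b _ => n + 1 + 5 * (i - 1)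
  | BV.a i, BV.a _ => n + 2 + 5 * (i - 1)
  | BV.a i, BV.s => n + 2 + 5 * (i - 1)
  | BV.a i, BV.t => n + 3 + 5 * (i - 1)
  | BV.b i, BV.b _ => n + 4 + 5 * (i - 1)
  | BV.b i, BV.d => n + 4 + 5 * (i - 1)
  | BV.b i, BV.a _ => n + 5 + 5 * (i - 1)
  | BV.b i, BV.s => n + 5 + 5 * (i - 1)
  | BV.d, BV.s => 6 * n + 1
  | BV.s, BV.s => 6 * n + 2
  | _, _ => 0

/-- One step of Bland's policy iteration with edge numbering `N`:
apply the improving switch with the smallest number. -/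
def IsBlandStep (n : ℕ) (N : BV → BV → ℕ) (π π' : BV → BV) : Prop :=
  ∃ u v, BImproving n π u v ∧ (∀ u' v', BImproving n π u' v' → N u v ≤ N u' v') ∧
    π' = Function.update π u v

/-- `BlandReaches n N π ψ` says that Bland's policy iteration started at `π` visits `ψ`. -/
def BlandReaches (n : ℕ) (N : BV → BV → ℕ) : (BV → BV) → (BV → BV) → Prop :=
  Relation.ReflTransGen (IsBlandStep n N)

/-- The canonical policy `π_0` for `0`: `travel 1`, `skip i` and `leave i` are active. -/
def pi0 (n : ℕ) : BV → BV := fun u =>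
  match u with
  | BV.t => BV.a 1
  | BV.a i => aN n (i + 1)
  | BV.b i => aN n (i + 1)
  | BV.d => BV.s
  | BV.s => BV.s

/-- The optimal policy `π_*`: `travel 1`, `enter i` for all `i`, `leave j` for `j < n`,
and `stay n` are active. -/
def piStar (n : ℕ) : BV → BV := fun u =>
  match u with
  | BV.t => BV.a 1
  | BV.a i => BV.b i
  | BV.b i => if i = n then BV.d else BV.a (i + 1)
  | BV.d => BV.s
  | BV.s => BV.s

/-! ## Bits and canonical policies -/

/-- The least significant set bit `ℓ_1(x)` (1-based). -/
noncomputable def lsb (x : ℕ) : ℕ := sInf {i | 1 ≤ i ∧ Nat.testBit x (i - 1)}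

/-- The most significant set bit `m(x)` (1-based). -/
noncomputable def msb1 (x : ℕ) : ℕ := sSup {i | 1 ≤ i ∧ Nat.testBit x (i - 1)}

/-- The least unset bit `ℓ_0(x)` (1-based). -/
noncomputable def lzero (x : ℕ) : ℕ := sInf {i | 1 ≤ i ∧ ¬ Nat.testBit x (i - 1)}

/-- `L_i(x) = max { j ≤ i-2 | x_j = 1 or j = 1 }` (1-based bits). -/
noncomputable def Lfun (i x : ℕ) : ℕ :=
  sSup {j | 1 ≤ j ∧ j ≤ i - 2 ∧ (Nat.testBit x (j - 1) ∨ j = 1)}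

/-- `IsCanonical n x π` says that `π` is the canonical policy `π_x` for `x`. -/
noncomputable def IsCanonical (n x : ℕ) (π : BV → BV) : Prop :=
  IsBPolicy n π ∧
  if x = 0 then
    π BV.t = BV.a 1 ∧
      ∀ i, 1 ≤ i → i ≤ n → π (BV.a i) = aN n (i + 1) ∧ π (BV.b i) = aN n (i + 1)
  else
    π BV.t = BV.a (lsb x) ∧
    π (BV.b (msb1 x)) = aN n (msb1 x + 1) ∧
    (∀ i, msb1 x < i → i ≤ n → π (BV.a i) = aN n (i + 1) ∧ π (BV.b i) = aN n (i + 1)) ∧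
    ∀ i, 1 ≤ i → i ≤ n → Nat.testBit x (i - 1) →
      π (BV.a i) = BV.b i ∧
      (i = 2 → π (BV.b 1) = BV.a 2 ∧ (¬ Nat.testBit x 0 → π (BV.a 1) = BV.a 2)) ∧
      (3 ≤ i → Nat.testBit x (i - 2) → π (BV.b (i - 1)) = BV.a i) ∧
      (3 ≤ i → ¬ Nat.testBit x (i - 2) →
        π (BV.b (i - 1)) = BV.b i ∧ π (BV.a (i - 1)) = BV.a i ∧
        π (BV.b (i - 2)) = BV.a (i - 1) ∧
        (Lfun i x < i - 2 →
          ∀ j, Lfun i x + 1 ≤ j → j ≤ i - 2 →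
            π (BV.a j) = BV.t ∧ π (BV.b (j - 1)) = BV.b j) ∧
        (Lfun i x = 1 → ¬ Nat.testBit x 0 → π (BV.a 1) = BV.t))

/-- Activating a list of edges in a policy, from left to right. -/
def activateList (π : BV → BV) (L : List (BV × BV)) : BV → BV :=
  L.foldl (fun σ e => Function.update σ e.1 e.2) π

/-- The canonical phases w.r.t. an odd number `x` (with `ℓ := ℓ_0(x)`), as a list of edges
to be activated in order. -/
noncomputable def phaseList (n x : ℕ) : List (BV × BV) :=
  let ℓ := lzero x
  (if Nat.testBit x ℓ then [(BV.b ℓ, aN n (ℓ + 1))] else []) ++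
  (if Nat.testBit x ℓ ∨ msb1 x < ℓ then [(BV.b (ℓ - 1), BV.b ℓ)] else []) ++
  [(BV.a ℓ, BV.b ℓ), (BV.t, BV.a ℓ)] ++
  ((List.range (ℓ - 2)).map fun j => (BV.a (j + 1), BV.t)) ++
  [(BV.a (ℓ - 1), BV.a ℓ)] ++
  (((List.range (ℓ - 3)).reverse).map fun j => (BV.b (j + 1), BV.b (j + 2))) ++
  (if ℓ = 2 then [(BV.b 1, BV.a 2)] else [])

/-! ## The Markov decision process `𝔇_n` -/

/-- Vertices of `𝔇_n`: the original vertices (`base`), and for every edge `(v,w)` of `𝔅_n`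
other than the self-loop, the gadget vertices `x v w`, `y v w`, `z v w`. -/
inductive DV : Type where
  | base : BV → DV
  | x : BV → BV → DV
  | y : BV → BV → DV
  | z : BV → BV → DV
deriving DecidableEq

/-- The edges of `𝔅_n` that get replaced by gadgets (all edges except the self-loop `(s,s)`). -/
def DEdgePair (n : ℕ) (v w : BV) : Prop := BEdge n v w ∧ v ≠ BV.s

/-- The vertex set of `𝔇_n`. -/
def IsDVertex (n : ℕ) : DV → Prop
  | DV.base v => IsBVertex n v
  | DV.x v w => DEdgePair n v w
  | DV.y v w => DEdgePair n v w
  | DV.z v w => DEdgePair n v w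

/-- The agent vertices of `𝔇_n` (all vertices except the randomization vertices `y v w`). -/
def IsDAgent (n : ℕ) : DV → Prop
  | DV.base v => IsBVertex n v
  | DV.x v w => DEdgePair n v w
  | DV.y _ _ => False
  | DV.z v w => DEdgePair n v w

/-- The agent edges of `𝔇_n`. -/
def DEdge (n : ℕ) (u u' : DV) : Prop :=
  (∃ v w, DEdgePair n v w ∧
    ((u = DV.base v ∧ u' = DV.x v w) ∨ (u = DV.x v w ∧ u' = DV.base v) ∨
     (u = DV.x v w ∧ u' = DV.y v w) ∨ (u = DV.z v w ∧ u' = DV.base w))) ∨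
  (u = DV.base BV.s ∧ u' = DV.base BV.s)

/-- The reward function of `𝔇_n`: the edge `(z v w, w)` carries the reward of the original
edge `(v,w)`; all other agent edges have reward `0`. -/
def rD (n : ℕ) (u u' : DV) : ℚ :=
  match u, u' with
  | DV.z v w, DV.base w' => if w' = w then rB n v w else 0
  | _, _ => 0

/-- A policy for `𝔇_n` chooses an outgoing agent edge at every agent vertex. -/
def IsDPolicy (n : ℕ) (π : DV → DV) : Prop := ∀ u, IsDAgent n u → DEdge n u (π u)

/-- `IsDVal n p π V` says that `V` satisfies the Bellman equations characterizing the value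
function of the policy `π` for `𝔇_n` with probabilities `p`, with `V s = 0`. -/
def IsDVal (n : ℕ) (p : BV → ℚ) (π : DV → DV) (V : DV → ℚ) : Prop :=
  V (DV.base BV.s) = 0 ∧
  (∀ u, IsDAgent n u → V u = rD n u (π u) + V (π u)) ∧
  (∀ v w, DEdgePair n v w →
    V (DV.y v w) = p v * V (DV.z v w) + (1 - p v) * V (DV.base v))

open Classical in
/-- The value function of a (weak unichain) policy `π` for `𝔇_n`: the unique solution of the
Bellman equations (normalized to `0` outside the vertex set). -/
noncomputable def DVal (n : ℕ) (p : BV → ℚ) (π : DV → DV) : DV → ℚ :=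
  if h : ∃! V : DV → ℚ, IsDVal n p π V ∧ ∀ u, ¬ IsDVertex n u → V u = 0 then
    h.exists.choose
  else fun _ => 0

/-- The reduced costs of an agent edge `(u,u')` of `𝔇_n` w.r.t. the policy `π`. -/
noncomputable def zD (n : ℕ) (p : BV → ℚ) (π : DV → DV) (u u' : DV) : ℚ :=
  rD n u u' + DVal n p π u' - DVal n p π u

/-- An agent edge of `𝔇_n` is an improving switch if its reduced costs are positive. -/
def DImproving (n : ℕ) (p : BV → ℚ) (π : DV → DV) (u u' : DV) : Prop :=
  DEdge n u u' ∧ 0 < zD n p π u u'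

/-- One (agent or positive-probability randomization) step of the process `𝔇_n` under `π`. -/
def DStep (n : ℕ) (p : BV → ℚ) (π : DV → DV) (u u' : DV) : Prop :=
  (IsDAgent n u ∧ u' = π u) ∨
  (∃ v w, DEdgePair n v w ∧ u = DV.y v w ∧
    ((u' = DV.z v w ∧ 0 < p v) ∨ (u' = DV.base v ∧ 0 < 1 - p v)))

/-- A policy for `𝔇_n` is weak unichain if it reaches `s` with probability one from every
vertex, i.e. `s` is reachable via active/positive-probability steps from every vertex. -/
def DWeakUnichain (n : ℕ) (p : BV → ℚ) (π : DV → DV) : Prop :=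
  ∀ u, IsDVertex n u → Relation.ReflTransGen (DStep n p π) u (DV.base BV.s)

/-- The twin policy of a policy `π` for `𝔅_n`: every vertex `v ≠ s` is `π v`-oriented. -/
def twin (π : BV → BV) : DV → DV := fun u =>
  match u with
  | DV.base v => if v = BV.s then DV.base BV.s else DV.x v (π v)
  | DV.x v w => if w = π v then DV.y v w else DV.base v
  | DV.y v w => DV.y v w
  | DV.z _ w => DV.base w

/-- The vertex numbering `𝒩_V` of `𝔅_n`: the order `(t, a 1, b 1, a 2, b 2, …, a n, b n, d, s)`. -/
def NV (n : ℕ) : BV → ℕ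
  | BV.t => 1
  | BV.a i => 2 * i
  | BV.b i => 2 * i + 1
  | BV.d => 2 * n + 2
  | BV.s => 2 * n + 3

/-- The specific probabilities `p_v = 2^{-𝒩_V(v)·(n+5)}`. -/
noncomputable def pSpec (n : ℕ) (v : BV) : ℚ := (2 : ℚ) ^ (-((NV n v * (n + 5) : ℕ) : ℤ))

/-- The set `B(v)` of agent edges of `𝔇_n` belonging to the vertex `v`. -/
def Belongs (n : ℕ) (v : BV) (e : DV × DV) : Prop :=
  ∃ w, DEdgePair n v w ∧
    (e = (DV.x v w, DV.y v w) ∨ e = (DV.base v, DV.x v w) ∨ e = (DV.x v w, DV.base v))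

/-- Applying the improving switch `e` to the policy `π` yields `π'`. -/
def DApply (n : ℕ) (p : BV → ℚ) (π : DV → DV) (e : DV × DV) (π' : DV → DV) : Prop :=
  DImproving n p π e.1 e.2 ∧ π' = Function.update π e.1 e.2

/-- One step of Bland's policy iteration on `𝔇_n` with edge numbering `N`. -/
def IsBlandStepD (n : ℕ) (p : BV → ℚ) (N : DV → DV → ℕ) (π π' : DV → DV) : Prop :=
  ∃ u u', DImproving n p π u u' ∧ (∀ a b, DImproving n p π a b → N u u' ≤ N a b) ∧
    π' = Function.update π u u'

/-- One step of Dantzig's policy iteration on `𝔇_n`: apply an improving switch of maximal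
reduced costs. -/
def DantzigStep (n : ℕ) (p : BV → ℚ) (π π' : DV → DV) : Prop :=
  ∃ u u', DImproving n p π u u' ∧
    (∀ a b, DImproving n p π a b → zD n p π a b ≤ zD n p π u u') ∧
    π' = Function.update π u u'

/-- The finite set of vertices of `𝔅_n`, as a `Finset`. -/
noncomputable def BVSet (n : ℕ) : Finset BV :=
  {BV.t, BV.d, BV.s} ∪ (Finset.Icc 1 n).image BV.a ∪ (Finset.Icc 1 n).image BV.b

/-- The finite set of agent vertices of `𝔇_n`, as a `Finset`. -/
noncomputable def DAgentSet (n : ℕ) : Finset DV := by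
  classical
  exact ((BVSet n).image DV.base) ∪
    (((BVSet n ×ˢ BVSet n).filter fun e => DEdgePair n e.1 e.2).image fun e => DV.x e.1 e.2) ∪
    (((BVSet n ×ˢ BVSet n).filter fun e => DEdgePair n e.1 e.2).image fun e => DV.z e.1 e.2)

/-- The objective of the Largest Increase rule: the sum of the values of all agent vertices. -/
noncomputable def LIobj (n : ℕ) (p : BV → ℚ) (π : DV → DV) : ℚ :=
  ∑ u ∈ DAgentSet n, DVal n p π u

/-- One step of the Largest Increase policy iteration on `𝔇_n`: apply an improving switch
maximizing the sum of all agent vertex values of the resulting policy. -/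
def LIStep (n : ℕ) (p : BV → ℚ) (π π' : DV → DV) : Prop :=
  ∃ u u', DImproving n p π u u' ∧
    (∀ a b, DImproving n p π a b →
      LIobj n p (Function.update π a b) ≤ LIobj n p (Function.update π u u')) ∧
    π' = Function.update π u u'

/-- `N` is a Bland numbering `𝒩_{𝔇_n}` for `𝔇_n`: it is injective on agent edges, the edges
`(x v w, v)` all come first, within each gadget `(x v w, y v w)` precedes `(v, x v w)`,
the gadget blocks are ordered according to `𝒩_{𝔅_n}`, and the self-loop comes last. -/
def IsDBlandNumbering (n : ℕ) (N : DV → DV → ℕ) : Prop :=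
  (∀ u₁ u₂ u₁' u₂', DEdge n u₁ u₂ → DEdge n u₁' u₂' → N u₁ u₂ = N u₁' u₂' →
    u₁ = u₁' ∧ u₂ = u₂') ∧
  (∀ v w v' w', DEdgePair n v w → DEdgePair n v' w' →
    N (DV.x v w) (DV.base v) < N (DV.x v' w') (DV.y v' w')) ∧
  (∀ v w, DEdgePair n v w → N (DV.x v w) (DV.y v w) < N (DV.base v) (DV.x v w)) ∧
  (∀ v w v' w', DEdgePair n v w → DEdgePair n v' w' → NB n v w < NB n v' w' →
    N (DV.base v) (DV.x v w) < N (DV.x v' w') (DV.y v' w')) ∧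
  (∀ v w, DEdgePair n v w → N (DV.base v) (DV.x v w) < N (DV.base BV.s) (DV.base BV.s))

/-! ## Abstract counter -/
namespace Ctr

inductive Act : Type where
  | e : Act
  | s : Act
  | b : Act

structure St where
  τ : ℕ
  α : ℕ → Act
  β : ℕ → Bool
  T : ℚ
  A : ℕ → ℚ
  B : ℕ → ℚ

def av (s : St) (i : ℕ) : Act → ℚ
  | Act.e => 2 ^ i + s.B i
  | Act.s => s.A (i + 1)
  | Act.b => s.T - 2 ^ i + 5 / 4

def bv (s : St) (i : ℕ) : Bool → ℚ
  | true => 3 / 4 + s.B (i + 1)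
  | false => s.A (i + 1)

structure Ok (n : ℕ) (s : St) : Prop where
  t1 : 1 ≤ s.τ
  t2 : s.τ ≤ n
  hT : s.T = s.A s.τ
  hA0 : s.A (n + 1) = 0
  hB0 : s.B (n + 1) = 0
  hA : ∀ i, 1 ≤ i → i ≤ n → s.A i = av s i (s.α i)
  hB : ∀ i, 1 ≤ i → i ≤ n → s.B i = bv s i (s.β i)

def OptT (n : ℕ) (s : St) : Prop := ∀ j, 1 ≤ j → j ≤ n → s.A j ≤ s.T
def OptA (s : St) (i : ℕ) : Prop := ∀ c, av s i c ≤ s.A i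
def OptB (s : St) (i : ℕ) : Prop := ∀ c, bv s i c ≤ s.B i

inductive Step (n : ℕ) (s s' : St) : Prop
  | t (j : ℕ) (h1 : 1 ≤ j) (h2 : j ≤ n) (hlt : s.T < s.A j)
      (hmax : ∀ i, 1 ≤ i → i ≤ n → s.A i ≤ s.A j)
      (e1 : s'.τ = j) (e2 : s'.α = s.α) (e3 : s'.β = s.β) : Step n s s'
  | a (i : ℕ) (c : Act) (h1 : 1 ≤ i) (h2 : i ≤ n) (hT : OptT n s)
      (hl : ∀ l, 1 ≤ l → l < i → OptA s l ∧ OptB s l)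
      (hlt : s.A i < av s i c) (hmax : ∀ c', av s i c' ≤ av s i c)
      (e1 : s'.τ = s.τ) (e2 : s'.α = Function.update s.α i c) (e3 : s'.β = s.β) : Step n s s'
  | b (i : ℕ) (c : Bool) (h1 : 1 ≤ i) (h2 : i ≤ n) (hT : OptT n s)
      (hl : ∀ l, 1 ≤ l → l < i → OptA s l ∧ OptB s l) (hA : OptA s i)
      (hlt : s.B i < bv s i c) (hmax : ∀ c', bv s i c' ≤ bv s i c)
      (e1 : s'.τ = s.τ) (e2 : s'.α = s.α) (e3 : s'.β = Function.update s.β i c) : Step n s s'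

def Imp (n : ℕ) (s : St) : Prop :=
  (∃ j, 1 ≤ j ∧ j ≤ n ∧ s.T < s.A j) ∨
  (∃ i c, 1 ≤ i ∧ i ≤ n ∧ s.A i < av s i c) ∨
  (∃ i c, 1 ≤ i ∧ i ≤ n ∧ s.B i < bv s i c)

inductive Must (n : ℕ) : ℕ → St → Prop
  | zero (s : St) : Must n 0 s
  | succ (c : ℕ) (s : St) (hi : Imp n s)
      (h : ∀ s', Ok n s' → Step n s s' → Must n c s') : Must n (c + 1) s

lemma Must.pred {n : ℕ} : ∀ {c : ℕ} {s : St}, Must n (c + 1) s → Must n c s := by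
  intro c
  induction c with
  | zero => intro s _; exact Must.zero s
  | succ c ih =>
    intro s h
    cases h with
    | succ _ _ hi h => exact Must.succ c s hi (fun s' ho hs => ih (h s' ho hs))

lemma Must.mono {n c d : ℕ} {s : St} (h : Must n d s) (hcd : c ≤ d) : Must n c s := by
  induction hcd with
  | refl => exact h
  | step _ ih => exact ih h.pred

/-! forced steps -/

lemma force_t {n c : ℕ} {s : St} (j : ℕ) (h1 : 1 ≤ j) (h2 : j ≤ n) (hlt : s.T < s.A j)
    (hmax : ∀ i, 1 ≤ i → i ≤ n → i ≠ j → s.A i < s.A j)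
    (k : ∀ s', Ok n s' → s'.τ = j → s'.α = s.α → s'.β = s.β → Must n c s') :
    Must n (c + 1) s := by
  refine Must.succ c s (Or.inl ⟨j, h1, h2, hlt⟩) ?_
  intro s' ho hs
  cases hs with
  | t i h1' h2' hlt' hmax' e1 e2 e3 =>
    by_cases hij : i = j
    · subst hij; exact k s' ho e1 e2 e3
    · have := hmax i h1' h2' hij
      have := hmax' j h1 h2
      linarith
  | a i c h1' h2' hT => have := hT j h1 h2; linarith
  | b i c h1' h2' hT => have := hT j h1 h2; linarith

lemma force_a {n c : ℕ} {s : St} (i : ℕ) (x : Act) (h1 : 1 ≤ i) (h2 : i ≤ n) (hT : OptT n s)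
    (hl : ∀ l, 1 ≤ l → l < i → OptA s l ∧ OptB s l)
    (hlt : s.A i < av s i x) (hmax : ∀ y, y ≠ x → av s i y < av s i x)
    (k : ∀ s', Ok n s' → s'.τ = s.τ → s'.α = Function.update s.α i x → s'.β = s.β → Must n c s') :
    Must n (c + 1) s := by
  refine Must.succ c s (Or.inr (Or.inl ⟨i, x, h1, h2, hlt⟩)) ?_
  intro s' ho hs
  cases hs with
  | t j h1' h2' hlt' => have := hT j h1' h2'; linarith
  | a j y h1' h2' hT' hl' hlt' hmax' e1 e2 e3 =>
    rcases lt_trichotomy i j with h | h | h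
    · have := (hl' i h1 h).1 x; linarith
    · subst h
      by_cases hxy : y = x
      · subst hxy; exact k s' ho e1 e2 e3
      · have := hmax y hxy; have := hmax' x; linarith
    · have := (hl j h1' h).1 y; linarith
  | b j y h1' h2' hT' hl' hA' hlt' hmax' e1 e2 e3 =>
    rcases lt_trichotomy i j with h | h | h
    · have := (hl' i h1 h).1 x; linarith
    · subst h
      have := hA' x; linarith
    · have := (hl j h1' h).2 y; linarith

lemma force_b {n c : ℕ} {s : St} (i : ℕ) (x : Bool) (h1 : 1 ≤ i) (h2 : i ≤ n) (hT : OptT n s)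
    (hl : ∀ l, 1 ≤ l → l < i → OptA s l ∧ OptB s l) (hA : OptA s i)
    (hlt : s.B i < bv s i x) (hself : s.β i = !x) (ho : Ok n s)
    (k : ∀ s', Ok n s' → s'.τ = s.τ → s'.α = s.α → s'.β = Function.update s.β i x → Must n c s') :
    Must n (c + 1) s := by
  refine Must.succ c s (Or.inr (Or.inr ⟨i, x, h1, h2, hlt⟩)) ?_
  intro s' ho' hs
  cases hs with
  | t j h1' h2' hlt' => have := hT j h1' h2'; linarith
  | a j y h1' h2' hT' hl' hlt' hmax' e1 e2 e3 =>
    rcases lt_trichotomy i j with h | h | h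
    · have := (hl' i h1 h).2 x; linarith
    · subst h
      have := hA y; linarith
    · have := (hl j h1' h).1 y; linarith
  | b j y h1' h2' hT' hl' hA' hlt' hmax' e1 e2 e3 =>
    rcases lt_trichotomy i j with h | h | h
    · have := (hl' i h1 h).2 x; linarith
    · subst h
      by_cases hxy : y = x
      · subst hxy; exact k s' ho' e1 e2 e3
      · exfalso
        have hy : y = !x := by cases x <;> cases y <;> simp_all
        have := ho.hB i h1 h2
        rw [hself, ← hy] at this; linarith
    · have := (hl j h1' h).2 y; linarith

/-! exterior lemma -/

lemma two_le_pow {i : ℕ} (h : 1 ≤ i) : (2 : ℚ) ≤ 2 ^ i := by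
  calc (2 : ℚ) = 2 ^ 1 := by norm_num
    _ ≤ 2 ^ i := pow_le_pow_right₀ (by norm_num) h

lemma pow_lt {i j : ℕ} (h : i < j) : 2 * (2 : ℚ) ^ i ≤ 2 ^ j := by
  calc 2 * (2 : ℚ) ^ i = 2 ^ (i + 1) := by ring
    _ ≤ 2 ^ j := pow_le_pow_right₀ (by norm_num) h

def RelA (s s' : St) (i : ℕ) : Prop :=
  s'.A i = s.A i ∨ (s'.A i - s'.T = s.A i - s.T ∧ s.A i ≤ s.T + 3 / 2 - 2 ^ i)
def RelB (s s' : St) (i : ℕ) : Prop :=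
  s'.B i = s.B i ∨ (s'.B i - s'.T = s.B i - s.T ∧ s.B i ≤ s.T + 3 / 2 - 2 ^ (i + 1))

structure Same (k : ℕ) (s s' : St) : Prop where
  a : ∀ i, k < i → s'.α i = s.α i
  b : ∀ i, k < i → s'.β i = s.β i

lemma Same.trans {k : ℕ} {s s' s'' : St} (h : Same k s s') (h' : Same k s' s'') : Same k s s'' :=
  ⟨fun i hi => (h'.a i hi).trans (h.a i hi), fun i hi => (h'.b i hi).trans (h.b i hi)⟩

lemma Same.le {k l : ℕ} {s s' : St} (h : Same k s s') (hl : k ≤ l) : Same l s s' :=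
  ⟨fun i hi => h.a i (by omega), fun i hi => h.b i (by omega)⟩

lemma relB_of {n i : ℕ} {s s' : St} (ho : Ok n s) (ho' : Ok n s') (h1 : 1 ≤ i) (h2 : i ≤ n)
    (hb : s'.β i = s.β i) (hA : RelA s s' (i + 1)) (hB : RelB s s' (i + 1)) : RelB s s' i := by
  have e := ho.hB i h1 h2
  have e' := ho'.hB i h1 h2
  rw [hb] at e'
  have hp : (0 : ℚ) < 2 ^ i := by positivity
  have hp2 := two_le_pow h1
  unfold RelA RelB at *
  cases hc : s.β i <;> rw [hc] at e e' <;> simp only [bv] at e e'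
  · rcases hA with hA | ⟨hA, hA'⟩
    · left; rw [e, e', hA]
    · right; refine ⟨by linarith, by linarith⟩
  · rcases hB with hB | ⟨hB, hB'⟩
    · left; rw [e, e', hB]
    · right; refine ⟨by linarith, ?_⟩
      rw [pow_succ] at hB' ⊢
      rw [pow_succ] at hB'
      linarith

lemma ext {n k : ℕ} {s s' : St} (ho : Ok n s) (ho' : Ok n s') (h : Same k s s') :
    ∀ i, k < i → 1 ≤ i → i ≤ n + 1 → RelA s s' i ∧ RelB s s' i := by
  suffices H : ∀ d i, i + d = n + 1 → k < i → 1 ≤ i → RelA s s' i ∧ RelB s s' i by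
    intro i hk h1 h2
    exact H (n + 1 - i) i (by omega) hk h1
  intro d
  induction d with
  | zero =>
    intro i hi hk h1
    have : i = n + 1 := by omega
    subst this
    exact ⟨Or.inl (by rw [ho.hA0, ho'.hA0]), Or.inl (by rw [ho.hB0, ho'.hB0])⟩
  | succ d ih =>
    intro i hi hk h1
    obtain ⟨iA, iB⟩ := ih (i + 1) (by omega) (by omega) (by omega)
    have hB := relB_of ho ho' h1 (by omega) (h.b i hk) iA iB
    refine ⟨?_, hB⟩
    have e := ho.hA i h1 (by omega)
    have e' := ho'.hA i h1 (by omega)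
    rw [h.a i hk] at e'
    have hp : (0 : ℚ) < 2 ^ i := by positivity
    unfold RelA RelB at *
    cases hc : s.α i <;> rw [hc] at e e' <;> simp only [av] at e e'
    · rcases hB with hB | ⟨hB, hB'⟩
      · left; rw [e, e', hB]
      · right; rw [pow_succ] at hB'; exact ⟨by linarith, by linarith⟩
    · rcases iA with iA | ⟨iA, iA'⟩
      · left; rw [e, e', iA]
      · right; rw [pow_succ] at iA'; exact ⟨by linarith, by linarith⟩
    · right; exact ⟨by linarith, by linarith⟩

lemma RelA.const {s s' : St} {i : ℕ} (h : RelA s s' i) (hT : s.T + 3 / 2 < s.A i + 2 ^ i) :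
    s'.A i = s.A i := by
  rcases h with h | ⟨_, h⟩
  · exact h
  · linarith

lemma RelB.const {s s' : St} {i : ℕ} (h : RelB s s' i) (h1 : 1 ≤ i) (hT : s.T ≤ 2 ^ i + s.B i) :
    s'.B i = s.B i := by
  rcases h with h | ⟨_, h⟩
  · exact h
  · have := two_le_pow h1; rw [pow_succ] at h; linarith

lemma RelA.le {s s' : St} {i : ℕ} (h : RelA s s' i) (hA : s.A i ≤ s.T) (hT : s.T ≤ s'.T) :
    s'.A i ≤ s'.T := by
  rcases h with h | ⟨h, _⟩
  · rw [h]; linarith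
  · linarith

/-! initial segments -/

lemma av_e (s : St) (i : ℕ) : av s i Act.e = 2 ^ i + s.B i := rfl
lemma av_s (s : St) (i : ℕ) : av s i Act.s = s.A (i + 1) := rfl
lemma av_b (s : St) (i : ℕ) : av s i Act.b = s.T - 2 ^ i + 5 / 4 := rfl
lemma bv_t (s : St) (i : ℕ) : bv s i true = 3 / 4 + s.B (i + 1) := rfl
lemma bv_f (s : St) (i : ℕ) : bv s i false = s.A (i + 1) := rfl

lemma Ok.e {n i : ℕ} {s : St} (ho : Ok n s) (h1 : 1 ≤ i) (h2 : i ≤ n) (h : s.α i = Act.e) :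
    s.A i = 2 ^ i + s.B i := by rw [ho.hA i h1 h2, h, av_e]
lemma Ok.s {n i : ℕ} {s : St} (ho : Ok n s) (h1 : 1 ≤ i) (h2 : i ≤ n) (h : s.α i = Act.s) :
    s.A i = s.A (i + 1) := by rw [ho.hA i h1 h2, h, av_s]
lemma Ok.b {n i : ℕ} {s : St} (ho : Ok n s) (h1 : 1 ≤ i) (h2 : i ≤ n) (h : s.α i = Act.b) :
    s.A i = s.T - 2 ^ i + 5 / 4 := by rw [ho.hA i h1 h2, h, av_b]
lemma Ok.st {n i : ℕ} {s : St} (ho : Ok n s) (h1 : 1 ≤ i) (h2 : i ≤ n) (h : s.β i = true) :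
    s.B i = 3 / 4 + s.B (i + 1) := by rw [ho.hB i h1 h2, h, bv_t]
lemma Ok.lv {n i : ℕ} {s : St} (ho : Ok n s) (h1 : 1 ≤ i) (h2 : i ≤ n) (h : s.β i = false) :
    s.B i = s.A (i + 1) := by rw [ho.hB i h1 h2, h, bv_f]

/-- The initial segment of levels `1..k` is entered everywhere and left below `k`. -/
structure P (k : ℕ) (s : St) : Prop where
  a : ∀ i, 1 ≤ i → i ≤ k → s.α i = Act.e
  b : ∀ i, 1 ≤ i → i < k → s.β i = false

lemma P.A {n k : ℕ} {s : St} (h : P k s) (ho : Ok n s) (hk : k ≤ n) :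
    ∀ i, 1 ≤ i → i ≤ k → s.A i = 2 ^ (k + 1) - 2 ^ i + s.B k := by
  suffices H : ∀ d i, i + d = k → 1 ≤ i → s.A i = 2 ^ (k + 1) - 2 ^ i + s.B k by
    intro i h1 h2
    exact H (k - i) i (by omega) h1
  intro d
  induction d with
  | zero =>
    intro i hi h1
    have : i = k := by omega
    subst this
    rw [ho.e h1 hk (h.a i h1 le_rfl)]; ring
  | succ d ih =>
    intro i hi h1
    rw [ho.e h1 (by omega) (h.a i h1 (by omega)), ho.lv h1 (by omega) (h.b i h1 (by omega)),
      ih (i + 1) (by omega) (by omega)]; ring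

lemma P.T {n k : ℕ} {s : St} (h : P k s) (ho : Ok n s) (hk : k ≤ n) (h1 : 1 ≤ k) (ht : s.τ = 1) :
    s.T = 2 ^ (k + 1) - 2 + s.B k := by
  rw [ho.hT, ht, h.A ho hk 1 le_rfl h1]; ring

lemma P.opt {n k : ℕ} {s : St} (h : P k s) (ho : Ok n s) (hk : k ≤ n) (h1 : 1 ≤ k) (ht : s.τ = 1)
    (hA : s.A (k + 1) ≤ 2 ^ k + s.B k) :
    (∀ l, 1 ≤ l → l < k → OptA s l ∧ OptB s l) ∧ OptA s k := by
  have hT := h.T ho hk h1 ht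
  have hAA := h.A ho hk
  have oA : ∀ l, 1 ≤ l → l ≤ k → OptA s l := by
    intro l l1 lk c
    have e := ho.e l1 (by omega) (h.a l l1 lk)
    have e' := hAA l l1 lk
    have hp : (0 : ℚ) < 2 ^ l := by positivity
    cases c
    · rw [av_e, e]
    · rw [av_s]
      rcases lt_or_eq_of_le lk with lk | lk
      · rw [hAA (l + 1) (by omega) (by omega), e', pow_succ 2 l]; linarith
      · subst lk; linarith
    · rw [av_b, hT, e']; linarith
  refine ⟨fun l l1 lk => ⟨oA l l1 (by omega), ?_⟩, oA k h1 le_rfl⟩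
  intro c
  have e := ho.lv l1 (by omega) (h.b l l1 lk)
  cases c
  · rw [bv_f, e]
  · rw [bv_t, e, ho.e (i := l + 1) (by omega) (by omega) (h.a (l + 1) (by omega) (by omega))]
    have := two_le_pow (i := l + 1) (by omega)
    linarith

lemma P.optT {n k : ℕ} {s : St} (h : P k s) (ho : Ok n s) (hk : k ≤ n) (h1 : 1 ≤ k) (ht : s.τ = 1)
    (hx : ∀ i, k < i → i ≤ n → s.A i ≤ s.T) : OptT n s := by
  intro j j1 j2
  by_cases hj : j ≤ k
  · rw [h.T ho hk h1 ht, h.A ho hk j j1 hj]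
    have := two_le_pow j1; linarith
  · exact hx j (by omega) j2

structure EPre (n j : ℕ) (s : St) : Prop where
  p : P j s
  t : 1 ≤ j → s.τ = 1
  stay : 1 ≤ j → s.β j = true
  z : j = 0 → s.T ≤ s.B 1
  hA : s.A (j + 1) ≤ s.B (j + 1)
  hA' : s.A (j + 2) ≤ s.B (j + 1)
  opt : OptT n s

def EThm (n j : ℕ) : Prop := ∀ s c, Ok n s → EPre n j s →
  (∀ s', Ok n s' → s'.τ = 1 → P (j + 1) s' → s'.β (j + 1) = s.β (j + 1) → Same (j + 1) s s' →
    Must n c s') → Must n (c + 2 ^ j) s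

structure GPre (n k : ℕ) (s : St) : Prop where
  p : P k s
  stay : 1 ≤ k → s.β k = true
  ent : s.α (k + 1) = Act.e
  alt : (k = 0 ∧ s.τ = 1) ∨
    (s.T < s.A (k + 1) ∧ ∀ i, 1 ≤ i → i ≤ n → i ≠ k + 1 → s.A i < s.A (k + 1))

def GThm (n k : ℕ) : Prop := ∀ s c, Ok n s → GPre n k s →
  (∀ s', Ok n s' → s'.τ = 1 → P k s' → (1 ≤ k → s'.β k = false) → Same k s s' → Must n c s') →
    Must n (c + (2 ^ k - 1)) s

lemma P.congr {k : ℕ} {s s' : St} (h : P k s) (ha : ∀ i, i ≤ k → s'.α i = s.α i)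
    (hb : ∀ i, i < k → s'.β i = s.β i) : P k s' :=
  ⟨fun i h1 h2 => by rw [ha i h2, h.a i h1 h2], fun i h1 h2 => by rw [hb i h2, h.b i h1 h2]⟩

lemma E_of_G {n j : ℕ} (hj : j + 1 ≤ n) (hG : GThm n j) : EThm n j := by
  intro s c ho hp k
  have hp1 := two_le_pow (i := j + 1) (by omega)
  have hpj : (2 : ℚ) ^ (j + 1) = 2 * 2 ^ j := by ring
  have hBj : 1 ≤ j → s.B j = 3 / 4 + s.B (j + 1) := fun h => ho.st h (by omega) (hp.stay h)
  have hTE : 1 ≤ j → s.T = 2 ^ (j + 1) - 5 / 4 + s.B (j + 1) := fun h => by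
    rw [hp.p.T ho (by omega) h (hp.t h), hBj h]; ring
  have hTle : s.T ≤ 2 ^ (j + 1) - 5 / 4 + s.B (j + 1) := by
    rcases Nat.eq_zero_or_pos j with h | h
    · have := hp.z h; subst h; norm_num at *; linarith
    · exact (hTE h).le
  have hl : ∀ l, 1 ≤ l → l < j + 1 → OptA s l ∧ OptB s l := by
    intro l l1 lj
    have h1 : 1 ≤ j := by omega
    obtain ⟨o1, o2⟩ := hp.p.opt ho (by omega) h1 (hp.t h1) (by
      have := hp.hA; rw [hBj h1]; have := two_le_pow h1; linarith)
    rcases Nat.lt_succ_iff_lt_or_eq.mp lj with h | h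
    · exact o1 l l1 h
    · subst h
      refine ⟨o2, ?_⟩
      intro c
      have := hp.hA
      cases c
      · rw [bv_f, hBj h1]; linarith
      · rw [bv_t, hBj h1]
  have hcnt : c + 2 ^ j = (c + (2 ^ j - 1)) + 1 := by
    have : 1 ≤ 2 ^ j := Nat.one_le_two_pow
    omega
  rw [hcnt]
  refine force_a (j + 1) Act.e (by omega) hj hp.opt hl ?_ ?_ ?_
  · rw [av_e]; have := hp.hA; linarith
  · intro y hy
    have := hp.hA'
    cases y
    · exact absurd rfl hy
    · rw [av_e, av_s]; linarith
    · rw [av_e, av_b]; linarith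
  intro s1 ho1 e1 e2 e3
  have hsame : Same (j + 1) s s1 := ⟨fun i hi => by
    rw [e2, Function.update_of_ne (by omega)], fun i _ => by rw [e3]⟩
  have hx := ext ho ho1 hsame
  have hx2 := hx (j + 2) (by omega) (by omega) (by omega)
  have hB1 : s1.B (j + 1) = s.B (j + 1) :=
    (relB_of ho ho1 (by omega) hj (by rw [e3]) hx2.1 hx2.2).const (by omega) (by linarith)
  have hα : s1.α (j + 1) = Act.e := by rw [e2, Function.update_self]
  have hA1 : s1.A (j + 1) = 2 ^ (j + 1) + s.B (j + 1) := by
    rw [ho1.e (by omega) hj hα, hB1]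
  have hP1 : P j s1 := hp.p.congr (fun i hi => by rw [e2, Function.update_of_ne (by omega)])
    (fun i _ => by rw [e3])
  have hBj1 : 1 ≤ j → s1.B j = 3 / 4 + s.B (j + 1) := fun h => by
    rw [ho1.st h (by omega) (by rw [e3]; exact hp.stay h), hB1]
  refine hG s1 c ho1 ⟨hP1, fun h => by rw [e3]; exact hp.stay h, hα, ?_⟩ ?_
  · by_cases hc : j = 0 ∧ s1.τ = 1
    · exact Or.inl hc
    · right
      have hT1 : s1.T = s.T := by
        rcases Nat.eq_zero_or_pos j with h | h
        · have ht : s1.τ ≠ 1 := fun h' => hc ⟨h, h'⟩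
          have h1 := ho1.t1
          have h2 := ho1.t2
          have hr := (hx s1.τ (by omega) h1 (by omega)).1
          have h3 := two_le_pow h1
          have h4 : s.A s1.τ = s.T := by rw [ho.hT, e1]
          rw [ho1.hT, hr.const (by linarith), h4]
        · rw [hTE h, hP1.T ho1 (by omega) h (by rw [e1]; exact hp.t h), hBj1 h]; ring
      refine ⟨by rw [hT1, hA1]; linarith, ?_⟩
      intro i i1 i2 ij
      rw [hA1]
      by_cases hij : i ≤ j
      · rw [hP1.A ho1 (by omega) i i1 hij, hBj1 (by omega)]
        have := two_le_pow i1; linarith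
      · have := (hx i (by omega) i1 (by omega)).1.le (hp.opt i i1 i2) hT1.ge
        linarith
  · intro s2 ho2 et hP2 hb2 hs2
    refine k s2 ho2 et ⟨?_, ?_⟩ ?_ (hsame.trans (hs2.le (by omega)))
    · intro i i1 i2
      rcases Nat.lt_succ_iff_lt_or_eq.mp (Nat.lt_succ_of_le i2) with h | h
      · exact hP2.a i i1 (by omega)
      · rw [h, hs2.a _ (by omega), hα]
    · intro i i1 i2
      rcases Nat.lt_succ_iff_lt_or_eq.mp i2 with h | h
      · exact hP2.b i i1 h
      · subst h; exact hb2 i1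
    · rw [hs2.b _ (by omega), e3]

structure FPre (n k : ℕ) (s : St) : Prop where
  a : ∀ i, 1 ≤ i → i ≤ k + 1 → s.α i = Act.b
  b : ∀ i, 1 ≤ i → i ≤ k → s.β i = false
  hT : s.T ≤ s.B (k + 1)
  opt : OptT n s

def FThm (n k : ℕ) : Prop := ∀ s c, Ok n s → FPre n k s →
  (∀ s', Ok n s' → (k = 0 → s' = s) → (1 ≤ k → s'.τ = 1) → P k s' → (1 ≤ k → s'.β k = true) →
    Same k s s' → Must n c s') → Must n (c + (2 ^ k - 1)) s

lemma FE {n j : ℕ} (hj : j + 1 ≤ n) (hF : FThm n j) (hE : EThm n j) {s : St} {c : ℕ}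
    (ho : Ok n s) (hp : FPre n j s)
    (hA' : ∀ s2, Ok n s2 → Same j s s2 → s2.T ≤ 2 ^ (j + 1) - 5 / 4 + s2.B (j + 1) →
      s2.A (j + 2) ≤ s2.B (j + 1))
    (k : ∀ s', Ok n s' → s'.τ = 1 → P (j + 1) s' → s'.β (j + 1) = s.β (j + 1) →
      Same (j + 1) s s' → Must n c s') : Must n (c + (2 ^ (j + 1) - 1)) s := by
  have hcnt : c + (2 ^ (j + 1) - 1) = (c + 2 ^ j) + (2 ^ j - 1) := by
    have : 1 ≤ 2 ^ j := Nat.one_le_two_pow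
    rw [pow_succ]; omega
  rw [hcnt]
  refine hF s _ ho hp ?_
  intro s2 ho2 hz ht hP hst hs
  have hx := ext ho ho2 hs
  have hp1 := two_le_pow (i := j + 1) (by omega)
  have hT := hp.hT
  have hB2 : s2.B (j + 1) = s.B (j + 1) :=
    (hx (j + 1) (by omega) (by omega) (by omega)).2.const (by omega) (by linarith)
  have hTE : 1 ≤ j → s2.T = 2 ^ (j + 1) - 5 / 4 + s2.B (j + 1) := fun h => by
    rw [hP.T ho2 (by omega) h (ht h), ho2.st h (by omega) (hst h)]; ring
  have hTle : s2.T ≤ 2 ^ (j + 1) - 5 / 4 + s2.B (j + 1) := by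
    rcases Nat.eq_zero_or_pos j with h | h
    · rw [hB2, hz h]; linarith
    · exact (hTE h).le
  refine hE s2 c ho2 ⟨hP, ht, hst, ?_, ?_, hA' s2 ho2 hs hTle, ?_⟩ ?_
  · intro h; rw [hz h]; subst h; exact hT
  · rw [ho2.b (by omega) hj (by rw [hs.a _ (by omega), hp.a _ (by omega) (by omega)])]
    linarith
  · rcases Nat.eq_zero_or_pos j with h | h
    · rw [hz h]; exact hp.opt
    · refine hP.optT ho2 (by omega) h (ht h) ?_
      intro i hi hn
      refine (hx i hi (by omega) (by omega)).1.le (hp.opt i (by omega) hn) ?_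
      rw [hTE h, hB2]; linarith
  · intro s3 ho3 et hP3 hb3 hs3
    exact k s3 ho3 et hP3 (by rw [hb3, hs.b _ (by omega)]) ((hs.le (by omega)).trans hs3)

lemma F_of_E {n : ℕ} : ∀ {k : ℕ}, k + 1 ≤ n → (∀ j, j < k → EThm n j) → FThm n k := by
  intro k
  induction k with
  | zero =>
    intro hk hE s c ho hp k
    have : c + (2 ^ 0 - 1) = c := by norm_num
    rw [this]
    exact k s ho (fun _ => rfl) (by omega) ⟨by omega, by omega⟩ (by omega)
      ⟨fun _ _ => rfl, fun _ _ => rfl⟩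
  | succ j ih =>
    intro hj hE s c ho hp k
    have hAA : ∀ i, 1 ≤ i → i ≤ j + 2 → s.A i = s.T - 2 ^ i + 5 / 4 := fun i h1 h2 =>
      ho.b h1 (by omega) (hp.a i h1 h2)
    have hBB : ∀ i, 1 ≤ i → i ≤ j + 1 → s.B i = s.T - 2 * 2 ^ i + 5 / 4 := fun i h1 h2 => by
      rw [ho.lv h1 (by omega) (hp.b i h1 h2), hAA _ (by omega) (by omega), pow_succ]; ring
    have hτ : j + 2 < s.τ := by
      by_contra hc
      have h1 := hAA s.τ ho.t1 (by omega)
      have h2 := two_le_pow ho.t1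
      have h3 := ho.hT
      linarith
    have oA : ∀ l, 1 ≤ l → l ≤ j + 1 → OptA s l := by
      intro l l1 l2 x
      have hp : (0 : ℚ) < 2 ^ l := by positivity
      rw [hAA l l1 (by omega)]
      cases x
      · rw [av_e, hBB l l1 l2]; linarith
      · rw [av_s, hAA (l + 1) (by omega) (by omega), pow_succ]; linarith
      · rw [av_b]
    have oB : ∀ l, 1 ≤ l → l < j + 1 → OptB s l := by
      intro l l1 l2 x
      have hp := two_le_pow l1
      rw [hBB l l1 (by omega)]
      cases x
      · rw [bv_f, hAA (l + 1) (by omega) (by omega), pow_succ]; linarith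
      · rw [bv_t, hBB (l + 1) (by omega) (by omega), pow_succ]; linarith
    have hT := hp.hT
    have hp1 := two_le_pow (i := j + 1) (by omega)
    refine Must.pred (force_b (j + 1) true (by omega) (by omega) hp.opt
      (fun l l1 l2 => ⟨oA l l1 (by omega), oB l l1 l2⟩) (oA _ (by omega) (by omega)) ?_
      (hp.b _ (by omega) (by omega)) ho ?_)
    · rw [bv_t, hBB _ (by omega) (by omega)]; linarith
    intro s1 ho1 e1 e2 e3
    have hsame : Same (j + 1) s s1 := ⟨fun i _ => by rw [e2], fun i hi => by
      rw [e3, Function.update_of_ne (by omega)]⟩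
    have hx := ext ho ho1 hsame
    have hp2 := two_le_pow (i := j + 2) (by omega)
    have hB1 : s1.B (j + 2) = s.B (j + 2) :=
      (hx (j + 2) (by omega) (by omega) (by omega)).2.const (by omega) (by linarith)
    have hT1 : s1.T = s.T := by
      have h3 := two_le_pow ho.t1
      have h4 := ho.t2
      have h5 := ho.hT
      rw [ho1.hT, e1, (hx s.τ (by omega) ho.t1 (by omega)).1.const (by linarith), h5]
    have hst : s1.β (j + 1) = true := by rw [e3, Function.update_self]
    have hBK : s1.B (j + 1) = 3 / 4 + s.B (j + 2) := by
      rw [ho1.st (by omega) (by omega) hst, hB1]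
    have hp1' : FPre n j s1 := by
      refine ⟨fun i h1 h2 => by rw [e2]; exact hp.a i h1 (by omega),
        fun i h1 h2 => by
          rw [e3, Function.update_of_ne (by omega)]; exact hp.b i h1 (by omega), ?_, ?_⟩
      · rw [hT1, hBK]; linarith
      · intro i i1 i2
        by_cases hi : i ≤ j + 2
        · rw [ho1.b i1 i2 (by rw [e2]; exact hp.a i i1 hi)]
          have := two_le_pow i1; linarith
        · exact (hx i (by omega) i1 (by omega)).1.le (hp.opt i i1 i2) hT1.ge
    refine FE (by omega) (ih (by omega) (fun l hl => hE l (by omega))) (hE j (by omega)) ho1 hp1'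
      ?_ ?_
    · intro s2 ho2 hs2 hT2
      rw [ho2.b (i := j + 2) (by omega) (by omega)
        (by rw [hs2.a _ (by omega), e2, hp.a _ (by omega) (by omega)]), pow_succ]
      linarith
    · intro s3 ho3 et hP3 hb3 hs3
      exact k s3 ho3 (by omega) (fun _ => et) hP3 (fun _ => by rw [hb3, hst]) (hsame.trans hs3)

structure HPre (n k : ℕ) (s : St) : Prop where
  a : ∀ i, 1 ≤ i → i ≤ k → s.α i = Act.b
  b : ∀ i, 1 ≤ i → i ≤ k → s.β i = false
  hT : s.T ≤ s.A (k + 1)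
  opt : OptT n s

lemma H_of_E {n k : ℕ} (hk : k ≤ n) (hE : ∀ j, j < k → EThm n j) {s : St} {c : ℕ} (ho : Ok n s)
    (hp : HPre n k s)
    (kk : ∀ s', Ok n s' → (k = 0 → s' = s) → (1 ≤ k → s'.τ = 1) → P k s' →
      (1 ≤ k → s'.β k = false) → Same k s s' → Must n c s') : Must n (c + (2 ^ k - 1)) s := by
  cases k with
  | zero =>
    have : c + (2 ^ 0 - 1) = c := by norm_num
    rw [this]
    exact kk s ho (fun _ => rfl) (by omega) ⟨by omega, by omega⟩ (by omega)
      ⟨fun _ _ => rfl, fun _ _ => rfl⟩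
  | succ j =>
    refine FE hk (F_of_E hk (fun l hl => hE l (by omega))) (hE j (by omega)) ho
      ⟨hp.a, fun i h1 h2 => hp.b i h1 (by omega), ?_, hp.opt⟩ ?_ ?_
    · rw [ho.lv (by omega) hk (hp.b _ (by omega) le_rfl)]; exact hp.hT
    · intro s2 ho2 hs2 _
      rw [ho2.lv (i := j + 1) (by omega) hk (by rw [hs2.b _ (by omega), hp.b _ (by omega) le_rfl])]
    · intro s3 ho3 et hP3 hb3 hs3
      exact kk s3 ho3 (by omega) (fun _ => et) hP3
        (fun _ => by rw [hb3, hp.b _ (by omega) le_rfl]) hs3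

/-- Resetting states: `travel (k+1)` is active and the levels `≤ j` already board. -/
structure Q (n k j : ℕ) (s : St) : Prop where
  t : s.τ = k + 1
  ab : ∀ i, 1 ≤ i → i ≤ j → s.α i = Act.b
  ae : ∀ i, j < i → i ≤ k + 1 → s.α i = Act.e
  b : ∀ i, 1 ≤ i → i < k → s.β i = false
  st : s.β k = true
  opt : ∀ i, k < i → i ≤ n → s.A i ≤ s.T

lemma Q.vals {n k j : ℕ} {s : St} (h : Q n k j s) (ho : Ok n s) (hk : k + 1 ≤ n) (k1 : 1 ≤ k) :
    (∀ i, 1 ≤ i → i ≤ j → i ≤ k → s.A i = s.T - 2 ^ i + 5 / 4) ∧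
    (∀ i, 1 ≤ i → j < i → i ≤ k → s.A i = s.T - 2 ^ i + 3 / 4) ∧
    s.B k = s.T - 2 * 2 ^ k + 3 / 4 := by
  have hT := ho.hT
  rw [h.t] at hT
  have hBk : j ≤ k → s.B k = s.T - 2 * 2 ^ k + 3 / 4 := by
    intro hjk
    rw [ho.st k1 (by omega) h.st]
    have := ho.e (i := k + 1) (by omega) hk (h.ae _ (by omega) le_rfl)
    rw [pow_succ] at this
    linarith
  by_cases hjk : j ≤ k
  swap
  · exfalso
    have := ho.b (i := k + 1) (by omega) hk (h.ab _ (by omega) (by omega))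
    have h2 := two_le_pow (i := k + 1) (by omega)
    linarith
  refine ⟨fun i i1 i2 i3 => ho.b i1 (by omega) (h.ab i i1 i2), ?_, hBk hjk⟩
  suffices H : ∀ d i, i + d = k → 1 ≤ i → j < i → s.A i = s.T - 2 ^ i + 3 / 4 by
    intro i i1 i2 i3
    exact H (k - i) i (by omega) i1 i2
  intro d
  induction d with
  | zero =>
    intro i hi i1 i2
    have : i = k := by omega
    subst this
    rw [ho.e i1 (by omega) (h.ae i i2 (by omega)), hBk hjk]; ring
  | succ d ih =>
    intro i hi i1 i2
    rw [ho.e i1 (by omega) (h.ae i i2 (by omega)), ho.lv i1 (by omega) (h.b i i1 (by omega)),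
      ih (i + 1) (by omega) (by omega) (by omega)]; ring

lemma Q.facts {n k j : ℕ} {s : St} (h : Q n k j s) (ho : Ok n s) (hk : k + 1 ≤ n) (k1 : 1 ≤ k)
    (hj : j < k) :
    OptT n s ∧ (∀ l, 1 ≤ l → l ≤ j → OptA s l ∧ OptB s l) := by
  obtain ⟨v1, v2, v3⟩ := h.vals ho hk k1
  have hlow : ∀ i, 1 ≤ i → i ≤ k → s.T - 2 ^ i + 3 / 4 ≤ s.A i := by
    intro i i1 i2
    by_cases hi : i ≤ j
    · rw [v1 i i1 hi i2]; linarith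
    · rw [v2 i i1 (by omega) i2]
  have hup : ∀ i, 1 ≤ i → i ≤ k → s.A i ≤ s.T - 2 ^ i + 5 / 4 := by
    intro i i1 i2
    by_cases hi : i ≤ j
    · rw [v1 i i1 hi i2]
    · rw [v2 i i1 (by omega) i2]; linarith
  have hBlv : ∀ i, 1 ≤ i → i < k → s.B i = s.A (i + 1) := fun i i1 i2 =>
    ho.lv i1 (by omega) (h.b i i1 i2)
  have hBup : ∀ i, 1 ≤ i → i ≤ k → s.B i ≤ s.T - 2 * 2 ^ i + 5 / 4 := by
    intro i i1 i2
    rcases lt_or_eq_of_le i2 with h' | h'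
    · rw [hBlv i i1 h']
      have := hup (i + 1) (by omega) (by omega)
      rw [pow_succ] at this; linarith
    · rw [h', v3]; linarith
  constructor
  · intro i i1 i2
    by_cases hi : i ≤ k
    · have := hup i i1 hi
      have := two_le_pow i1; linarith
    · exact h.opt i (by omega) i2
  · intro l l1 l2
    have hp := two_le_pow l1
    constructor
    · intro x
      rw [v1 l l1 l2 (by omega)]
      cases x
      · rw [av_e]; have := hBup l l1 (by omega); linarith
      · rw [av_s]; have := hup (l + 1) (by omega) (by omega)
        rw [pow_succ] at this; linarith
      · rw [av_b]
    · intro x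
      rw [hBlv l l1 (by omega)]
      cases x
      · rw [bv_f]
      · rw [bv_t]
        have h1 := hBup (l + 1) (by omega) (by omega)
        have h2 := hlow (l + 1) (by omega) (by omega)
        rw [pow_succ] at h1 h2; linarith

lemma Qboards {n k c : ℕ} (hk : k + 2 ≤ n) : ∀ d j s, j + d = k → Ok n s → Q n (k + 1) j s →
    (∀ s', Ok n s' → Q n (k + 1) k s' → Same (k + 1) s s' → Must n c s') → Must n c s := by
  intro d
  induction d with
  | zero =>
    intro j s hj ho hQ kk
    have : j = k := by omega
    subst this
    exact kk s ho hQ ⟨fun _ _ => rfl, fun _ _ => rfl⟩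
  | succ d ih =>
    intro j s hj ho hQ kk
    obtain ⟨oT, oL⟩ := hQ.facts ho hk (by omega) (by omega)
    obtain ⟨v1, v2, v3⟩ := hQ.vals ho hk (by omega)
    have hAj := v2 (j + 1) (by omega) (by omega) (by omega)
    have hAj' := v2 (j + 2) (by omega) (by omega) (by omega)
    have hp := two_le_pow (i := j + 1) (by omega)
    refine Must.pred (force_a (j + 1) Act.b (by omega) (by omega) oT
      (fun l l1 l2 => oL l l1 (by omega)) ?_ ?_ ?_)
    · rw [hAj, av_b]; linarith
    · intro y hy
      rw [av_b]
      cases y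
      · have := ho.hA (j + 1) (by omega) (by omega)
        rw [hQ.ae _ (by omega) (by omega)] at this
        rw [← this, hAj]; linarith
      · rw [av_s, hAj', pow_succ]; linarith
      · exact absurd rfl hy
    · intro s1 ho1 e1 e2 e3
      have hsame : Same (j + 1) s s1 := ⟨fun i hi => by
        rw [e2, Function.update_of_ne (by omega)], fun i _ => by rw [e3]⟩
      have hx := ext ho ho1 hsame
      have hT := ho.hT
      rw [hQ.t] at hT
      have hp' := two_le_pow (i := k + 2) (by omega)
      have hT1 : s1.T = s.T := by
        rw [ho1.hT, e1, hQ.t,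
          (hx (k + 2) (by omega) (by omega) (by omega)).1.const (by linarith), hT]
      refine ih (j + 1) s1 (by omega) ho1 ⟨by rw [e1, hQ.t], ?_, ?_, ?_, ?_, ?_⟩ ?_
      · intro i i1 i2
        rw [e2]
        by_cases hi : i = j + 1
        · rw [hi, Function.update_self]
        · rw [Function.update_of_ne hi]; exact hQ.ab i i1 (by omega)
      · intro i i1 i2
        rw [e2, Function.update_of_ne (by omega)]; exact hQ.ae i (by omega) i2
      · intro i i1 i2
        rw [e3]; exact hQ.b i i1 i2
      · rw [e3]; exact hQ.st
      · intro i i1 i2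
        exact (hx i (by omega) (by omega) (by omega)).1.le (hQ.opt i i1 i2) hT1.ge
      · intro s' ho' hQ' hs'
        exact kk s' ho' hQ' ((hsame.le (by omega)).trans hs')

end Ctr
namespace Ctr

lemma G_zero {n : ℕ} (hn : 1 ≤ n) : GThm n 0 := by
  intro s c ho hp k
  have : c + (2 ^ 0 - 1) = c := by norm_num
  rw [this]
  rcases hp.alt with ⟨_, h⟩ | ⟨h1, h2⟩
  · exact k s ho h ⟨by omega, by omega⟩ (by omega) ⟨fun _ _ => rfl, fun _ _ => rfl⟩
  · refine Must.pred (force_t 1 le_rfl hn h1 h2 ?_)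
    intro s' ho' e1 e2 e3
    exact k s' ho' e1 ⟨by omega, by omega⟩ (by omega)
      ⟨fun _ _ => by rw [e2], fun _ _ => by rw [e3]⟩

lemma G_succ {n j : ℕ} (hn : j + 2 ≤ n) (hE : ∀ l, l ≤ j → EThm n l) : GThm n (j + 1) := by
  intro s c ho hp k
  have hcnt : c + (2 ^ (j + 1) - 1) = (c + 2 ^ j) + (2 ^ j - 1) := by
    have : 1 ≤ 2 ^ j := Nat.one_le_two_pow
    rw [pow_succ]; omega
  rw [hcnt]
  have hpw : (2 : ℚ) ^ (j + 2) = 2 * 2 ^ (j + 1) := by ring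
  have hpw1 : (2 : ℚ) ^ (j + 1) = 2 * 2 ^ j := by ring
  have hp1 := two_le_pow (i := j + 1) (by omega)
  have hp0 : (0 : ℚ) < 2 ^ j := by positivity
  rcases hp.alt with ⟨h, _⟩ | ⟨h1, h2⟩
  · omega
  refine Must.pred (force_t (j + 2) (by omega) hn h1 h2 ?_)
  intro s1 ho1 t1 a1 b1
  have hs1 : Same 0 s s1 := ⟨fun _ _ => by rw [a1], fun _ _ => by rw [b1]⟩
  have hx1 := ext ho ho1 hs1
  have hT1 : s1.T = s1.A (j + 2) := by rw [ho1.hT, t1]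
  have hA1 : s1.A (j + 2) = s.A (j + 2) :=
    (hx1 (j + 2) (by omega) (by omega) (by omega)).1.const (by linarith)
  have hQ1 : Q n (j + 1) 0 s1 := by
    refine ⟨t1, by omega, ?_, ?_, ?_, ?_⟩
    · intro i i1 i2
      rw [a1]
      by_cases hi : i = j + 2
      · rw [hi]; exact hp.ent
      · exact hp.p.a i i1 (by omega)
    · intro i i1 i2
      rw [b1]; exact hp.p.b i i1 i2
    · rw [b1]; exact hp.stay (by omega)
    · intro i i1 i2
      by_cases hi : i = j + 2
      · rw [hi, hT1]
      · rcases (hx1 i (by omega) (by omega) (by omega)).1 with h | ⟨h, h'⟩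
        · rw [h, hT1, hA1]; exact (h2 i (by omega) i2 hi).le
        · have := two_le_pow (i := i) (by omega)
          linarith
  refine Qboards hn j 0 s1 (by omega) ho1 hQ1 ?_
  intro s2 ho2 hQ2 hs2
  obtain ⟨oT, oL⟩ := hQ2.facts ho2 hn (by omega) (by omega)
  obtain ⟨v1, v2, v3⟩ := hQ2.vals ho2 hn (by omega)
  have hAk := v2 (j + 1) (by omega) (by omega) le_rfl
  have hT2 : s2.T = s2.A (j + 2) := by rw [ho2.hT, hQ2.t]
  refine Must.pred (force_a (j + 1) Act.s (by omega) (by omega) oT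
      (fun l l1 l2 => oL l l1 (by omega)) ?_ ?_ ?_)
  · rw [hAk, av_s, ← hT2]; linarith
  · intro y hy
    rw [av_s, ← hT2]
    cases y
    · have := ho2.hA (j + 1) (by omega) (by omega)
      rw [hQ2.ae _ (by omega) (by omega)] at this
      rw [← this, hAk]; linarith
    · exact absurd rfl hy
    · rw [av_b]; linarith
  intro s3 ho3 t3 a3 b3
  have hs3 : Same (j + 1) s2 s3 := ⟨fun i hi => by
    rw [a3, Function.update_of_ne (by omega)], fun i _ => by rw [b3]⟩
  have hx3 := ext ho2 ho3 hs3
  obtain ⟨a, ha⟩ : ∃ a, a = s2.T := ⟨_, rfl⟩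
  have hA3 : s3.A (j + 2) = a := by
    rw [(hx3 (j + 2) (by omega) (by omega) (by omega)).1.const (by linarith), ← hT2, ha]
  have hT3 : s3.T = a := by rw [ho3.hT, t3, hQ2.t, hA3]
  have hA3' : s3.A (j + 1) = a := by
    rw [ho3.s (by omega) (by omega) (by rw [a3, Function.update_self]), hA3]
  have hoptx : ∀ i, j + 1 < i → i ≤ n → s3.A i ≤ s3.T := fun i i1 i2 =>
    (hx3 i i1 (by omega) (by omega)).1.le (hQ2.opt i i1 i2) (by rw [hT3, ha])
  have hH : HPre n j s3 := by
    have hb : ∀ i, 1 ≤ i → i ≤ j → s3.α i = Act.b := fun i i1 i2 => by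
      rw [a3, Function.update_of_ne (by omega)]; exact hQ2.ab i i1 i2
    refine ⟨hb, fun i i1 i2 => by rw [b3]; exact hQ2.b i i1 (by omega), by rw [hT3, hA3'], ?_⟩
    intro i i1 i2
    rcases lt_trichotomy i (j + 1) with h | h | h
    · rw [ho3.b i1 i2 (hb i i1 (by omega))]
      have := two_le_pow i1; linarith
    · rw [h, hA3', hT3]
    · exact hoptx i h i2
  refine H_of_E (by omega) (fun l hl => hE l (by omega)) ho3 hH ?_
  intro s4 ho4 z4 t4 P4 b4 hs4
  have hx4 := ext ho3 ho4 hs4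
  have hA4 : s4.A (j + 2) = a := by
    rw [(hx4 (j + 2) (by omega) (by omega) (by omega)).1.const (by linarith), hA3]
  have α4 : s4.α (j + 1) = Act.s := by rw [hs4.a _ (by omega), a3, Function.update_self]
  have α4' : s4.α (j + 2) = Act.e := by
    rw [hs4.a _ (by omega), hs3.a _ (by omega)]; exact hQ2.ae _ (by omega) (by omega)
  have β4 : s4.β (j + 1) = true := by rw [hs4.b _ (by omega), b3]; exact hQ2.st
  have hA4' : s4.A (j + 1) = a := by rw [ho4.s (by omega) (by omega) α4, hA4]
  have hB4 : s4.B (j + 1) = 3 / 4 + a - 2 ^ (j + 2) := by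
    have := ho4.e (by omega) hn α4'
    rw [ho4.st (by omega) (by omega) β4]
    show 3 / 4 + s4.B (j + 2) = _
    linarith
  have hB4j : 1 ≤ j → s4.B j = a := fun h => by rw [ho4.lv h (by omega) (b4 h), hA4']
  have hT4 : 1 ≤ j → s4.T = 2 ^ (j + 1) - 2 + a := fun h => by
    rw [P4.T ho4 (by omega) h (t4 h), hB4j h]
  have hT4z : j = 0 → s4.T = a := fun h => by rw [z4 h, hT3]
  have hT4le : s4.T ≤ 2 ^ (j + 1) - 2 + a ∧ a ≤ s4.T := by
    rcases Nat.eq_zero_or_pos j with h | h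
    · rw [hT4z h]; constructor <;> linarith
    · rw [hT4 h]; constructor <;> linarith
  have oT4x : ∀ i, j < i → i ≤ n → s4.A i ≤ s4.T := fun i i1 i2 =>
    (hx4 i i1 (by omega) (by omega)).1.le (hH.opt i (by omega) i2) (by rw [hT3]; exact hT4le.2)
  have oT4 : OptT n s4 := by
    rcases Nat.eq_zero_or_pos j with h | h
    · intro i i1 i2; exact oT4x i (by omega) i2
    · exact P4.optT ho4 (by omega) h (t4 h) oT4x
  have hlow : ∀ l, 1 ≤ l → l < j + 1 → OptA s4 l ∧ OptB s4 l := by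
    intro l l1 l2
    have hj : 1 ≤ j := by omega
    obtain ⟨o1, o2⟩ := P4.opt ho4 (by omega) hj (t4 hj) (by rw [hA4', hB4j hj]; linarith)
    rcases lt_or_eq_of_le (Nat.lt_succ_iff.mp l2) with h | h
    · exact o1 l l1 h
    · subst h
      refine ⟨o2, ?_⟩
      intro x
      rw [hB4j l1]
      cases x
      · rw [bv_f, hA4']
      · rw [bv_t, hB4]; linarith
  have oA4 : OptA s4 (j + 1) := by
    intro x
    rw [hA4']
    cases x
    · rw [av_e, hB4]; linarith
    · rw [av_s, hA4]
    · rw [av_b]; linarith [hT4le.1]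
  refine Must.pred (force_b (j + 1) false (by omega) (by omega) oT4 hlow oA4 ?_ (by rw [β4]; rfl)
    ho4 ?_)
  · rw [bv_f, hB4, hA4]; linarith
  intro s5 ho5 t5 a5 b5
  have hs5 : Same (j + 1) s4 s5 := ⟨fun i _ => by rw [a5], fun i hi => by
    rw [b5, Function.update_of_ne (by omega)]⟩
  have hx5 := ext ho4 ho5 hs5
  have hA5 : s5.A (j + 2) = a := by
    rw [(hx5 (j + 2) (by omega) (by omega) (by omega)).1.const (by linarith [hT4le.1]), hA4]
  have β5 : s5.β (j + 1) = false := by rw [b5, Function.update_self]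
  have hB5 : s5.B (j + 1) = a := by rw [ho5.lv (by omega) (by omega) β5, hA5]
  have hA5' : s5.A (j + 1) = a := by rw [ho5.s (by omega) (by omega) (by rw [a5, α4]), hA5]
  have P5 : P j s5 := P4.congr (fun i _ => by rw [a5]) (fun i hi => by
    rw [b5, Function.update_of_ne (by omega)])
  have β5j : 1 ≤ j → s5.β j = false := fun h => by
    rw [b5, Function.update_of_ne (by omega), b4 h]
  have hB5j : 1 ≤ j → s5.B j = a := fun h => by rw [ho5.lv h (by omega) (β5j h), hA5']
  have hT5 : s5.T = s4.T := by
    rcases Nat.eq_zero_or_pos j with h | h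
    · rw [ho5.hT, t5, z4 h, t3, hQ2.t, hA5, hT3]
    · rw [P5.T ho5 (by omega) h (by rw [t5, t4 h]), hB5j h, hT4 h]
  have oT5x : ∀ i, j < i → i ≤ n → s5.A i ≤ s5.T := by
    intro i i1 i2
    by_cases hi : i = j + 1
    · rw [hi, hA5', hT5]; exact hT4le.2
    · exact (hx5 i (by omega) (by omega) (by omega)).1.le (oT4x i i1 i2) hT5.ge
  have oT5 : OptT n s5 := by
    rcases Nat.eq_zero_or_pos j with h | h
    · intro i i1 i2; exact oT5x i (by omega) i2
    · exact P5.optT ho5 (by omega) h (by rw [t5, t4 h]) oT5x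
  have S5 : Same (j + 1) s s5 :=
    (((hs1.le (by omega)).trans hs2).trans hs3).trans ((hs4.le (by omega)).trans hs5)
  have fin : ∀ s6, Ok n s6 → EPre n j s6 → s6.β (j + 1) = false → Same (j + 1) s s6 →
      Must n (c + 2 ^ j) s6 := by
    intro s6 ho6 he hb hs
    refine hE j le_rfl s6 c ho6 he ?_
    intro s7 ho7 t7 P7 b7 hs7
    exact k s7 ho7 t7 P7 (fun _ => by rw [b7, hb]) (hs.trans hs7)
  rcases Nat.eq_zero_or_pos j with h | h
  · refine fin s5 ho5 ⟨P5, by omega, by omega, ?_, by rw [hA5', hB5], by rw [hA5, hB5], oT5⟩ β5 S5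
    intro _
    rw [hT5, hT4z h]
    subst h
    exact hB5.ge
  · have t5' : s5.τ = 1 := by rw [t5, t4 h]
    obtain ⟨o1, o2⟩ := P5.opt ho5 (by omega) h t5' (by rw [hA5', hB5j h]; linarith)
    refine Must.pred (force_b j true h (by omega) oT5 o1 o2 ?_ (β5j h) ho5 ?_)
    · rw [bv_t, hB5, hB5j h]; linarith
    intro s6 ho6 t6 a6 b6
    have hs6 : Same j s5 s6 := ⟨fun i _ => by rw [a6], fun i hi => by
      rw [b6, Function.update_of_ne (by omega)]⟩
    have hx6 := ext ho5 ho6 hs6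
    have β6 : s6.β (j + 1) = false := by rw [hs6.b _ (by omega), β5]
    have hT5' := hT4 h
    have hA6 : s6.A (j + 2) = a := by
      rw [(hx6 (j + 2) (by omega) (by omega) (by omega)).1.const (by linarith), hA5]
    have hB6 : s6.B (j + 1) = a := by rw [ho6.lv (by omega) (by omega) β6, hA6]
    have hA6' : s6.A (j + 1) = a := by
      rw [ho6.s (by omega) (by omega) (by rw [a6, a5, α4]), hA6]
    have β6j : s6.β j = true := by rw [b6, Function.update_self]
    have P6 : P j s6 := P5.congr (fun i _ => by rw [a6]) (fun i hi => by
      rw [b6, Function.update_of_ne (by omega)])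
    have hT6 : s5.T ≤ s6.T := by
      rw [P6.T ho6 (by omega) h (by rw [t6, t5']), ho6.st h (by omega) β6j, hB6, hT5, hT5']
      linarith
    refine fin s6 ho6 ⟨P6, fun _ => by rw [t6, t5'], fun _ => β6j, by omega,
      by rw [hA6', hB6], by rw [hA6, hB6], ?_⟩ β6 (S5.trans (hs6.le (by omega)))
    refine P6.optT ho6 (by omega) h (by rw [t6, t5']) ?_
    intro i i1 i2
    exact (hx6 i i1 (by omega) (by omega)).1.le (oT5 i (by omega) i2) hT6

lemma G_all {n : ℕ} : ∀ k, k + 1 ≤ n → GThm n k := by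
  intro k
  induction k using Nat.strong_induction_on with
  | _ k ih =>
    intro hk
    cases k with
    | zero => exact G_zero hk
    | succ j => exact G_succ hk (fun l hl => E_of_G (by omega) (ih l (by omega) (by omega)))

lemma E_all {n j : ℕ} (hj : j + 1 ≤ n) : EThm n j := E_of_G hj (G_all j hj)

end Ctr
namespace Ctr

lemma ext_zero {n k : ℕ} {s : St} (ho : Ok n s) (ha : ∀ i, k < i → i ≤ n → s.α i = Act.s)
    (hb : ∀ i, k < i → i ≤ n → s.β i = false) :
    ∀ i, k < i → i ≤ n + 1 → s.A i = 0 ∧ s.B i = 0 := by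
  suffices H : ∀ d i, i + d = n + 1 → k < i → s.A i = 0 ∧ s.B i = 0 by
    intro i hk h2
    exact H (n + 1 - i) i (by omega) hk
  intro d
  induction d with
  | zero =>
    intro i hi hk
    have : i = n + 1 := by omega
    subst this
    exact ⟨ho.hA0, ho.hB0⟩
  | succ d ih =>
    intro i hi hk
    obtain ⟨iA, iB⟩ := ih (i + 1) (by omega) (by omega)
    exact ⟨by rw [ho.s (by omega) (by omega) (ha i hk (by omega)), iA],
      by rw [ho.lv (by omega) (by omega) (hb i hk (by omega)), iA]⟩

structure Z (n k : ℕ) (s : St) : Prop where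
  t : s.τ = 1
  p : P k s
  st : 1 ≤ k → s.β k = true
  a : ∀ i, k < i → i ≤ n → s.α i = Act.s
  b : ∀ i, k < i → i ≤ n → s.β i = false

lemma start {n : ℕ} {s : St} (ho : Ok n s) (hz : Z n 0 s) : ∀ k, k ≤ n → ∀ c,
    (∀ s', Ok n s' → Z n k s' → Must n c s') → Must n (c + (2 ^ k - 1)) s := by
  intro k
  induction k with
  | zero =>
    intro _ c kk
    have : c + (2 ^ 0 - 1) = c := by norm_num
    rw [this]
    exact kk s ho hz
  | succ j ih =>
    intro hj c kk
    have hcnt : c + (2 ^ (j + 1) - 1) = (c + 2 ^ j) + (2 ^ j - 1) := by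
      have : 1 ≤ 2 ^ j := Nat.one_le_two_pow
      rw [pow_succ]; omega
    rw [hcnt]
    refine ih (by omega) _ ?_
    intro s1 ho1 z1
    have hx1 := ext_zero ho1 z1.a z1.b
    have hp1 := two_le_pow (i := j + 1) (by omega)
    have oT1 : OptT n s1 := by
      rcases Nat.eq_zero_or_pos j with h | h
      · intro i i1 i2
        rw [ho1.hT, z1.t, (hx1 i (by omega) (by omega)).1, (hx1 1 (by omega) (by omega)).1]
      · refine z1.p.optT ho1 (by omega) h z1.t ?_
        intro i i1 i2
        rw [z1.p.T ho1 (by omega) h z1.t, (hx1 i i1 (by omega)).1,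
          ho1.st h (by omega) (z1.st h), (hx1 (j + 1) (by omega) (by omega)).2]
        linarith
    have hA := hx1 (j + 1) (by omega) (by omega)
    have hA2 : s1.A (j + 2) = 0 ∨ j + 1 = n := by
      by_cases h : j + 1 = n
      · right; exact h
      · left; exact (hx1 (j + 2) (by omega) (by omega)).1
    refine E_all hj s1 c ho1 ⟨z1.p, fun _ => z1.t, z1.st, ?_, by rw [hA.1, hA.2], ?_, oT1⟩ ?_
    · intro h
      subst h
      rw [ho1.hT, z1.t, hA.1, hA.2]
    · rw [(hx1 (j + 2) (by omega) (by omega)).1, hA.2]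
    · intro s2 ho2 t2 P2 b2 hs2
      have a2' : ∀ i, j + 1 < i → i ≤ n → s2.α i = Act.s := fun i i1 i2 => by
        rw [hs2.a i i1]; exact z1.a i (by omega) i2
      have b2' : ∀ i, j + 1 < i → i ≤ n → s2.β i = false := fun i i1 i2 => by
        rw [hs2.b i i1]; exact z1.b i (by omega) i2
      have hx2 := ext_zero ho2 a2' b2'
      have β2 : s2.β (j + 1) = false := by rw [b2]; exact z1.b _ (by omega) hj
      have h0 := hx2 (j + 2) (by omega) (by omega)
      have hB2 : s2.B (j + 1) = 0 := by rw [ho2.lv (by omega) hj β2]; exact h0.1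
      obtain ⟨o1, o2⟩ := P2.opt ho2 hj (by omega) t2 (by
        rw [hB2]; show s2.A (j + 2) ≤ _; rw [h0.1]; linarith)
      have oT2 : OptT n s2 := by
        refine P2.optT ho2 hj (by omega) t2 ?_
        intro i i1 i2
        rw [P2.T ho2 hj (by omega) t2, hB2, (hx2 i i1 (by omega)).1, pow_succ]
        linarith
      refine Must.pred (force_b (j + 1) true (by omega) hj oT2 o1 o2 ?_ (by rw [β2]; rfl) ho2 ?_)
      · rw [bv_t, hB2]; show 0 < 3 / 4 + s2.B (j + 2); rw [h0.2]; norm_num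
      intro s3 ho3 t3 a3 b3
      refine kk s3 ho3 ⟨by rw [t3, t2], P2.congr (fun i _ => by rw [a3]) (fun i hi => by
        rw [b3, Function.update_of_ne (by omega)]), fun _ => by rw [b3, Function.update_self], ?_, ?_⟩
      · intro i i1 i2; rw [a3]; exact a2' i i1 i2
      · intro i i1 i2; rw [b3, Function.update_of_ne (by omega)]; exact b2' i i1 i2

theorem main {n : ℕ} {s : St} (ho : Ok n s) (hz : Z n 0 s) : Must n (2 ^ n - 1) s := by
  have := start ho hz n le_rfl 0 (fun s' _ _ => Must.zero s')
  simpa using this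

end Ctr

/-! ## Link between `𝔇_n` and the abstract counter -/
namespace Link

lemma edge_src {n : ℕ} {v w : BV} (h : BEdge n v w) : IsBVertex n v := by
  rcases h with ⟨i, h1, h2, rfl, rfl⟩ | ⟨i, h1, h2, rfl, rfl⟩ | ⟨i, h1, h2, rfl, rfl⟩ |
    ⟨i, h1, h2, rfl, rfl⟩ | ⟨i, h1, h2, rfl, rfl⟩ | ⟨i, h1, h2, rfl, rfl⟩ | ⟨rfl, rfl⟩ | ⟨rfl, rfl⟩
  all_goals simp [IsBVertex, *]

lemma vert_aN {n i : ℕ} (h1 : 1 ≤ i) (h2 : i ≤ n + 1) : IsBVertex n (aN n i) := by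
  unfold aN; split_ifs with h
  · simp [IsBVertex]
  · simp only [IsBVertex]; omega

lemma vert_bN {n i : ℕ} (h1 : 1 ≤ i) (h2 : i ≤ n + 1) : IsBVertex n (bN n i) := by
  unfold bN; split_ifs with h
  · simp [IsBVertex]
  · simp only [IsBVertex]; omega

lemma edge_tgt {n : ℕ} {v w : BV} (h : BEdge n v w) : IsBVertex n w := by
  rcases h with ⟨i, h1, h2, rfl, rfl⟩ | ⟨i, h1, h2, rfl, rfl⟩ | ⟨i, h1, h2, rfl, rfl⟩ |
    ⟨i, h1, h2, rfl, rfl⟩ | ⟨i, h1, h2, rfl, rfl⟩ | ⟨i, h1, h2, rfl, rfl⟩ | ⟨rfl, rfl⟩ | ⟨rfl, rfl⟩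
  · exact ⟨h1, h2⟩
  · exact ⟨h1, h2⟩
  · exact vert_aN (by omega) (by omega)
  · trivial
  · exact vert_bN (by omega) (by omega)
  · exact vert_aN (by omega) (by omega)
  · trivial
  · trivial

/-- Potential function. -/
def pot (n : ℕ) : BV → ℚ
  | BV.t => 3 / 2
  | BV.a i => 2 ^ i
  | BV.b i => 2 ^ (i + 1)
  | BV.d => 2 ^ (n + 1) + 3 / 4
  | BV.s => 2 ^ (n + 1) + 3 / 4

lemma r_skip (n i : ℕ) : rB n (BV.a i) (aN n (i + 1)) = 0 := by
  unfold aN; split_ifs <;> simp [rB]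
lemma r_leave (n i : ℕ) : rB n (BV.b i) (aN n (i + 1)) = 0 := by
  unfold aN; split_ifs <;> simp [rB]
lemma r_stay (n i : ℕ) : rB n (BV.b i) (bN n (i + 1)) = 3 / 4 := by
  unfold bN; split_ifs with h
  · have : i = n := by omega
    simp [rB, this]
  · simp [rB]
lemma r_enter (n i : ℕ) : rB n (BV.a i) (BV.b i) = 2 ^ i := by simp [rB]
lemma r_board (n i : ℕ) : rB n (BV.a i) BV.t = -(2 ^ i) + 5 / 4 := by simp [rB]
lemma r_travel (n i : ℕ) : rB n BV.t (BV.a i) = 0 := by simp [rB]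
lemma r_d (n : ℕ) : rB n BV.d BV.s = 0 := by simp [rB]
lemma r_s (n : ℕ) : rB n BV.s BV.s = 0 := by simp [rB]

lemma r_le {n : ℕ} {v w : BV} (h : BEdge n v w) : rB n v w ≤ pot n w - pot n v := by
  rcases h with ⟨i, h1, h2, rfl, rfl⟩ | ⟨i, h1, h2, rfl, rfl⟩ | ⟨i, h1, h2, rfl, rfl⟩ |
    ⟨i, h1, h2, rfl, rfl⟩ | ⟨i, h1, h2, rfl, rfl⟩ | ⟨i, h1, h2, rfl, rfl⟩ | ⟨rfl, rfl⟩ | ⟨rfl, rfl⟩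
  · rw [r_travel]; simp only [pot]
    have := Ctr.two_le_pow h1; linarith
  · rw [r_enter]; simp only [pot]; rw [pow_succ]; linarith
  · rw [r_skip]
    have := Ctr.two_le_pow h1
    unfold aN; split_ifs with h
    · have : i = n := by omega
      subst this
      simp only [pot]; rw [pow_succ]; linarith
    · simp only [pot]; rw [pow_succ]; linarith
  · rw [r_board]; simp only [pot]; linarith
  · rw [r_stay]
    have := Ctr.two_le_pow h1
    unfold bN; split_ifs with h
    · have : i = n := by omega
      subst this
      simp only [pot]; linarith
    · simp only [pot]; rw [pow_succ, pow_succ]; linarith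
  · rw [r_leave]
    have := Ctr.two_le_pow h1
    unfold aN; split_ifs with h
    · have : i = n := by omega
      subst this
      simp only [pot]; linarith
    · simp only [pot]; linarith
  · rw [r_d]; simp [pot]
  · rw [r_s]; simp [pot]

lemma r_int (n : ℕ) (v w : BV) : ∃ k : ℤ, 4 * rB n v w = k := by
  unfold rB
  split <;> try split_ifs
  · rename_i i j h
    exact ⟨4 * 2 ^ i, by push_cast; ring⟩
  · exact ⟨0, by norm_num⟩
  · rename_i i
    exact ⟨-(4 * 2 ^ i) + 5, by push_cast; ring⟩
  · exact ⟨3, by norm_num⟩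
  · exact ⟨0, by norm_num⟩
  · exact ⟨3, by norm_num⟩
  · exact ⟨0, by norm_num⟩
  · exact ⟨0, by norm_num⟩

lemma edge_rank {n : ℕ} {v w : BV} (h : BEdge n v w) : v = BV.s ∨ w = BV.t ∨ NV n v < NV n w := by
  rcases h with ⟨i, h1, h2, rfl, rfl⟩ | ⟨i, h1, h2, rfl, rfl⟩ | ⟨i, h1, h2, rfl, rfl⟩ |
    ⟨i, h1, h2, rfl, rfl⟩ | ⟨i, h1, h2, rfl, rfl⟩ | ⟨i, h1, h2, rfl, rfl⟩ | ⟨rfl, rfl⟩ | ⟨rfl, rfl⟩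
  · right; right; simp only [NV]; omega
  · right; right; simp only [NV]; omega
  · right; right; unfold aN; split_ifs <;> simp only [NV] <;> omega
  · right; left; rfl
  · right; right; unfold bN; split_ifs <;> simp only [NV] <;> omega
  · right; right; unfold aN; split_ifs <;> simp only [NV] <;> omega
  · right; right; simp only [NV]; omega
  · left; rfl

lemma NV_le {n : ℕ} {v : BV} (h : IsBVertex n v) : NV n v ≤ 2 * n + 3 := by
  cases v <;> simp only [NV, IsBVertex] at * <;> omega

lemma proper_of {n : ℕ} {π : BV → BV} {W : BV → ℚ} (he : ∀ v, IsBVertex n v → BEdge n v (π v))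
    (hW : ∀ v, IsBVertex n v → W v ≤ rB n v (π v) + W (π v)) :
    ∀ v, IsBVertex n v → ∃ k, π^[k] v = BV.s := by
  have key : ∀ N v, 2 * n + 3 - NV n v ≤ N → IsBVertex n v →
      ∃ k, π^[k] v = BV.s ∨ (π^[k] v = BV.t ∧ W v + pot n v ≤ W BV.t + pot n BV.t) := by
    intro N
    induction N with
    | zero =>
      intro v hN hv
      have := NV_le hv
      refine ⟨0, Or.inl ?_⟩
      cases v <;> simp only [NV, IsBVertex] at * <;> first | omega | rfl
    | succ N ih =>
      intro v hN hv
      have e := he v hv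
      have hw := hW v hv
      have hr := r_le e
      rcases edge_rank e with h | h | h
      · exact ⟨0, Or.inl h⟩
      · refine ⟨1, Or.inr ⟨h, ?_⟩⟩
        rw [h] at hw hr; linarith
      · have := NV_le (edge_tgt e)
        obtain ⟨k, hk⟩ := ih (π v) (by omega) (edge_tgt e)
        refine ⟨k + 1, ?_⟩
        rw [Function.iterate_succ_apply]
        rcases hk with hk | ⟨hk, h'⟩
        · exact Or.inl hk
        · exact Or.inr ⟨hk, by linarith⟩
  have ht : ∃ k, π^[k] BV.t = BV.s := by
    have e := he BV.t trivial
    have hw := hW BV.t trivial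
    obtain ⟨k, hk⟩ := key _ (π BV.t) le_rfl (edge_tgt e)
    refine ⟨k + 1, ?_⟩
    rw [Function.iterate_succ_apply]
    rcases hk with hk | ⟨hk, h'⟩
    · exact hk
    · exfalso
      rcases e with ⟨i, h1, h2, _, hi⟩ | ⟨i, h1, h2, h, _⟩ | ⟨i, h1, h2, h, _⟩ |
        ⟨i, h1, h2, h, _⟩ | ⟨i, h1, h2, h, _⟩ | ⟨i, h1, h2, h, _⟩ | ⟨h, _⟩ | ⟨h, _⟩ <;>
        try exact absurd h (by simp)
      rw [hi, r_travel] at hw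
      rw [hi] at h'
      simp only [pot] at h'
      have := Ctr.two_le_pow h1
      linarith
  intro v hv
  obtain ⟨k, hk | ⟨hk, _⟩⟩ := key _ v le_rfl hv
  · exact ⟨k, hk⟩
  · obtain ⟨l, hl⟩ := ht
    exact ⟨l + k, by rw [Function.iterate_add_apply, hk, hl]⟩

lemma path_ind {n : ℕ} {π : BV → BV} (he : ∀ v, IsBVertex n v → BEdge n v (π v))
    (hp : ∀ v, IsBVertex n v → ∃ k, π^[k] v = BV.s) (C : BV → Prop) (h0 : C BV.s)
    (hs : ∀ v, IsBVertex n v → v ≠ BV.s → C (π v) → C v) : ∀ v, IsBVertex n v → C v := by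
  have H : ∀ k v, IsBVertex n v → π^[k] v = BV.s → C v := by
    intro k
    induction k with
    | zero => intro v _ h; simp at h; rw [h]; exact h0
    | succ k ih =>
      intro v hv h
      by_cases hvs : v = BV.s
      · rw [hvs]; exact h0
      · exact hs v hv hvs (ih (π v) (edge_tgt (he v hv)) (by rwa [Function.iterate_succ_apply] at h))
  intro v hv
  obtain ⟨k, hk⟩ := hp v hv
  exact H k v hv hk

lemma BVal_s (n : ℕ) (π : BV → BV) : BVal n π BV.s = 0 := by
  unfold BVal
  split_ifs with h
  · have : Nat.find h = 0 := by rw [Nat.find_eq_zero]; rfl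
    simp [this]
  · rfl

lemma BVal_eq {n : ℕ} {π : BV → BV} {v : BV} (h : ∃ k, π^[k] v = BV.s) (hv : v ≠ BV.s) :
    BVal n π v = rB n v (π v) + BVal n π (π v) := by
  have h' : ∃ k, π^[k] (π v) = BV.s := by
    obtain ⟨k, hk⟩ := h
    cases k with
    | zero => exact absurd hk hv
    | succ k => exact ⟨k, by rwa [Function.iterate_succ_apply] at hk⟩
  unfold BVal
  rw [dif_pos h, dif_pos h']
  have : Nat.find h = Nat.find h' + 1 := Nat.find_comp_succ h h' hv
  rw [this, Finset.sum_range_succ', add_comm]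
  simp [Function.iterate_succ_apply]

/-- The invariant relating a policy of `𝔇_n` to a policy of `𝔅_n`. -/
structure Inv (n : ℕ) (σ : DV → DV) (π : BV → BV) (W : BV → ℚ) : Prop where
  e : ∀ v, IsBVertex n v → BEdge n v (π v)
  pr : ∀ v, IsBVertex n v → ∃ k, π^[k] v = BV.s
  w0 : W BV.s = 0
  w : ∀ v, IsBVertex n v → v ≠ BV.s → W v = rB n v (π v) + W (π v)
  nn : ∀ v, IsBVertex n v → 0 ≤ W v
  sb : ∀ v, IsBVertex n v → v ≠ BV.s → σ (DV.base v) = DV.x v (π v)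
  sx : ∀ v, IsBVertex n v → v ≠ BV.s → σ (DV.x v (π v)) = DV.y v (π v)
  sxx : ∀ v w, DEdgePair n v w → σ (DV.x v w) = DV.base v ∨ σ (DV.x v w) = DV.y v w
  sz : ∀ v w, DEdgePair n v w → σ (DV.z v w) = DV.base w
  ss : σ (DV.base BV.s) = DV.base BV.s

variable {n : ℕ} {σ : DV → DV} {π : BV → BV} {W : BV → ℚ}

lemma Inv.int (h : Inv n σ π W) : ∀ v, IsBVertex n v → ∃ k : ℤ, 4 * W v = k := by
  refine path_ind h.e h.pr _ ⟨0, by rw [h.w0]; simp⟩ ?_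
  rintro v hv hvs ⟨k, hk⟩
  obtain ⟨l, hl⟩ := r_int n v (π v)
  exact ⟨l + k, by rw [h.w v hv hvs, mul_add, hl, hk]; push_cast; ring⟩

lemma Inv.ub (h : Inv n σ π W) : ∀ v, IsBVertex n v → W v ≤ pot n BV.s - pot n v := by
  refine path_ind h.e h.pr _ (by rw [h.w0]; simp) ?_
  intro v hv hvs hk
  rw [h.w v hv hvs]
  have := r_le (h.e v hv)
  linarith

/-- Reduced costs in `𝔅_n`. -/
def cst (n : ℕ) (W : BV → ℚ) (v w : BV) : ℚ := rB n v w + W w - W v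

lemma Inv.cst_self (h : Inv n σ π W) {v : BV} (hv : IsBVertex n v) (hs : v ≠ BV.s) :
    cst n W v (π v) = 0 := by
  unfold cst; rw [h.w v hv hs]; ring

lemma pot_pos (n : ℕ) (v : BV) : 0 ≤ pot n v := by
  cases v <;> simp only [pot] <;> positivity

lemma Inv.cst_lt (h : Inv n σ π W) {v w : BV} (e : BEdge n v w) : cst n W v w < 2 ^ (n + 3) := by
  have h1 := r_le e
  have h2 := h.ub w (edge_tgt e)
  have h3 := h.nn v (edge_src e)
  have h4 := pot_pos n v
  unfold cst
  have h6 : pot n BV.s = 2 ^ n * 2 + 3 / 4 := by simp only [pot]; rw [pow_succ]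
  have h5 : (1 : ℚ) ≤ 2 ^ n := one_le_pow₀ (by norm_num)
  rw [h6] at h2
  rw [pow_succ, pow_succ, pow_succ]
  linarith

lemma Inv.cst_ge (h : Inv n σ π W) {v w : BV} (e : BEdge n v w) (hc : 0 < cst n W v w) :
    1 / 4 ≤ cst n W v w := by
  obtain ⟨a, ha⟩ := r_int n v w
  obtain ⟨b, hb⟩ := h.int v (edge_src e)
  obtain ⟨c, hc'⟩ := h.int w (edge_tgt e)
  have : 4 * cst n W v w = ((a + c - b : ℤ) : ℚ) := by
    unfold cst; push_cast; linarith
  have h1 : (0 : ℚ) < ((a + c - b : ℤ) : ℚ) := by rw [← this]; linarith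
  have h2 : 1 ≤ a + c - b := by exact_mod_cast h1
  have h3 : (1 : ℚ) ≤ ((a + c - b : ℤ) : ℚ) := by exact_mod_cast h2
  linarith

end Link

namespace Link

variable {n : ℕ} {σ : DV → DV} {π : BV → BV} {W : BV → ℚ}

/-- The explicit value function. -/
def val (n : ℕ) (p : BV → ℚ) (σ : DV → DV) (W : BV → ℚ) : DV → ℚ
  | DV.base v => W v
  | DV.x v w => if σ (DV.x v w) = DV.y v w then W v + p v * cst n W v w else W v
  | DV.y v w => W v + p v * cst n W v w
  | DV.z v w => rB n v w + W w

lemma Inv.val_of (h : Inv n σ π W) {p : BV → ℚ} (hp : ∀ v, p v ≠ 0) {V : DV → ℚ}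
    (hV : IsDVal n p σ V) : ∀ u, IsDVertex n u → V u = val n p σ W u := by
  obtain ⟨v0, v1, v2⟩ := hV
  have hz : ∀ v w, DEdgePair n v w → V (DV.z v w) = rB n v w + V (DV.base w) := by
    intro v w e
    rw [v1 (DV.z v w) e, h.sz v w e]; simp [rD]
  have hb : ∀ v, IsBVertex n v → V (DV.base v) = W v := by
    refine path_ind h.e h.pr _ (by rw [v0, h.w0]) ?_
    intro v hv hs ih
    have e : DEdgePair n v (π v) := ⟨h.e v hv, hs⟩
    have h1 : V (DV.base v) = V (DV.x v (π v)) := by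
      rw [v1 (DV.base v) hv, h.sb v hv hs]; simp [rD]
    have h2 : V (DV.x v (π v)) = V (DV.y v (π v)) := by
      rw [v1 (DV.x v (π v)) e, h.sx v hv hs]; simp [rD]
    have h3 := v2 v (π v) e
    rw [hz _ _ e, ih, ← h2, ← h1] at h3
    have h4 : p v * (V (DV.base v) - W v) = 0 := by rw [h.w v hv hs]; linarith
    rcases mul_eq_zero.mp h4 with h5 | h5
    · exact absurd h5 (hp v)
    · linarith
  have hy : ∀ v w, DEdgePair n v w → V (DV.y v w) = W v + p v * cst n W v w := by
    intro v w e
    rw [v2 v w e, hz v w e, hb v (edge_src e.1), hb w (edge_tgt e.1)]; unfold cst; ring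
  intro u hu
  cases u with
  | base v => exact hb v hu
  | x v w =>
    have := v1 (DV.x v w) hu
    simp only [val]
    split_ifs with hc
    · rw [this, hc, hy v w hu]; simp [rD]
    · rcases h.sxx v w hu with h' | h'
      · rw [this, h', hb v (edge_src hu.1)]; simp [rD]
      · exact absurd h' hc
  | y v w => exact hy v w hu
  | z v w => rw [hz v w hu, hb w (edge_tgt hu.1)]; rfl

open Classical in
lemma Inv.exists_val (h : Inv n σ π W) (p : BV → ℚ) :
    IsDVal n p σ (fun u => if IsDVertex n u then val n p σ W u else 0) := by
  refine ⟨?_, ?_, ?_⟩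
  · have : IsDVertex n (DV.base BV.s) := trivial
    simp only [this, if_true, val, h.w0]
  · intro u hu
    cases u with
    | base v =>
      have e1 : IsDVertex n (DV.base v) := hu
      by_cases hs : v = BV.s
      · subst hs
        rw [h.ss]; simp [rD]
      · have e2 : IsDVertex n (DV.x v (π v)) := ⟨h.e v hu, hs⟩
        simp only
        rw [h.sb v hu hs, if_pos e1, if_pos e2]
        simp only [val, rD, h.sx v hu hs, if_true, h.cst_self hu hs]
        ring
    | x v w =>
      have e1 : IsDVertex n (DV.x v w) := hu
      have e2 : IsDVertex n (DV.y v w) := hu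
      have e3 : IsDVertex n (DV.base v) := edge_src hu.1
      simp only
      rcases h.sxx v w hu with h' | h'
      · rw [h', if_pos e1, if_pos e3]
        simp [val, rD, h']
      · rw [h', if_pos e1, if_pos e2]
        simp [val, rD, h']
    | y v w => exact hu.elim
    | z v w =>
      have e1 : IsDVertex n (DV.z v w) := hu
      have e3 : IsDVertex n (DV.base w) := edge_tgt hu.1
      simp only
      rw [h.sz v w hu, if_pos e1, if_pos e3]
      simp [val, rD]
  · intro v w e
    have e1 : IsDVertex n (DV.y v w) := e
    have e2 : IsDVertex n (DV.z v w) := e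
    have e3 : IsDVertex n (DV.base v) := edge_src e.1
    simp only
    rw [if_pos e1, if_pos e2, if_pos e3]
    simp only [val, cst]; ring

lemma Inv.DVal_eq (h : Inv n σ π W) {p : BV → ℚ} (hp : ∀ v, p v ≠ 0) {u : DV}
    (hu : IsDVertex n u) : DVal n p σ u = val n p σ W u := by
  classical
  have hex : ∃! V : DV → ℚ, IsDVal n p σ V ∧ ∀ u, ¬ IsDVertex n u → V u = 0 := by
    refine ⟨_, ⟨h.exists_val p, fun u hu => by simp only [hu, if_false]⟩, ?_⟩
    intro V hV
    funext u
    by_cases hu : IsDVertex n u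
    · simp only [hu, if_true]; exact h.val_of hp hV.1 u hu
    · simp only [hu, if_false]; exact hV.2 u hu
  unfold DVal
  rw [dif_pos hex]
  exact h.val_of hp hex.exists.choose_spec.1 u hu

lemma pos (n : ℕ) (v : BV) : 0 < pSpec n v := by unfold pSpec; positivity

lemma pne (n : ℕ) (v : BV) : pSpec n v ≠ 0 := (pos n v).ne'

lemma p_ratio {n : ℕ} {v v' : BV} (h : NV n v' < NV n v) :
    2 ^ (n + 5) * pSpec n v ≤ pSpec n v' := by
  unfold pSpec
  rw [← zpow_natCast, ← zpow_add₀ (by norm_num)]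
  apply zpow_le_zpow_right₀ (by norm_num)
  have : (NV n v' + 1) * (n + 5) ≤ NV n v * (n + 5) := Nat.mul_le_mul_right _ h
  rw [add_mul] at this
  zify at this
  push_cast
  linarith

/-- every improving edge of `𝔅_n` gives an improving switch in `𝔇_n`. -/
lemma Inv.improving (h : Inv n σ π W) {v w : BV} (e : DEdgePair n v w) (hc : 0 < cst n W v w) :
    ∃ u u', DImproving n (pSpec n) σ u u' ∧
      zD n (pSpec n) σ u u' = pSpec n v * cst n W v w := by
  have ex : IsDVertex n (DV.x v w) := e
  have ey : IsDVertex n (DV.y v w) := e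
  have eb : IsDVertex n (DV.base v) := edge_src e.1
  rcases h.sxx v w e with h' | h'
  · have hz : zD n (pSpec n) σ (DV.x v w) (DV.y v w) = pSpec n v * cst n W v w := by
      unfold zD
      rw [h.DVal_eq (pne n) ex, h.DVal_eq (pne n) ey]
      simp [val, rD, h']
    exact ⟨_, _, ⟨Or.inl ⟨v, w, e, by simp⟩, by rw [hz]; exact mul_pos (pos n v) hc⟩, hz⟩
  · have hz : zD n (pSpec n) σ (DV.base v) (DV.x v w) = pSpec n v * cst n W v w := by
      unfold zD
      rw [h.DVal_eq (pne n) ex, h.DVal_eq (pne n) eb]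
      simp [val, rD, h']
    exact ⟨_, _, ⟨Or.inl ⟨v, w, e, by simp⟩, by rw [hz]; exact mul_pos (pos n v) hc⟩, hz⟩

/-- description of the improving switches. -/
lemma Inv.cases (h : Inv n σ π W) {u u' : DV} (hi : DImproving n (pSpec n) σ u u') :
    ∃ v w, DEdgePair n v w ∧
      ((u = DV.base v ∧ u' = DV.x v w ∧ σ (DV.x v w) = DV.y v w ∧ 0 < cst n W v w ∧
          zD n (pSpec n) σ u u' = pSpec n v * cst n W v w) ∨
        (u = DV.x v w ∧ u' = DV.base v ∧ w ≠ π v) ∨ (u = DV.x v w ∧ u' = DV.y v w)) := by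
  obtain ⟨hd, hz⟩ := hi
  rcases hd with ⟨v, w, e, hd⟩ | ⟨rfl, rfl⟩
  · have ex : IsDVertex n (DV.x v w) := e
    have ey : IsDVertex n (DV.y v w) := e
    have ez : IsDVertex n (DV.z v w) := e
    have eb : IsDVertex n (DV.base v) := edge_src e.1
    have eb' : IsDVertex n (DV.base w) := edge_tgt e.1
    refine ⟨v, w, e, ?_⟩
    rcases hd with ⟨rfl, rfl⟩ | ⟨rfl, rfl⟩ | ⟨rfl, rfl⟩ | ⟨rfl, rfl⟩
    · left
      have hzz : zD n (pSpec n) σ (DV.base v) (DV.x v w) =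
          if σ (DV.x v w) = DV.y v w then pSpec n v * cst n W v w else 0 := by
        unfold zD
        rw [h.DVal_eq (pne n) ex, h.DVal_eq (pne n) eb]
        simp only [val, rD]
        split_ifs <;> ring
      by_cases hc : σ (DV.x v w) = DV.y v w
      · rw [if_pos hc] at hzz
        refine ⟨rfl, rfl, hc, ?_, hzz⟩
        rw [hzz] at hz
        exact (mul_pos_iff_of_pos_left (pos n v)).mp hz
      · rw [if_neg hc] at hzz
        rw [hzz] at hz; exact absurd hz (lt_irrefl _)
    · right; left
      refine ⟨rfl, rfl, ?_⟩
      intro hw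
      subst hw
      have := h.cst_self (edge_src e.1) e.2
      unfold zD at hz
      rw [h.DVal_eq (pne n) ex, h.DVal_eq (pne n) eb] at hz
      simp [val, rD, this] at hz
    · right; right; exact ⟨rfl, rfl⟩
    · exfalso
      unfold zD at hz
      rw [h.DVal_eq (pne n) ez, h.DVal_eq (pne n) eb'] at hz
      simp [val, rD] at hz
  · exfalso
    simp [zD, rD] at hz

end Link

namespace Link

variable {n : ℕ} {σ : DV → DV} {π : BV → BV} {W : BV → ℚ}

lemma Inv.switch (h : Inv n σ π W) {v w : BV} (e : DEdgePair n v w) (hc : 0 < cst n W v w)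
    (hx : σ (DV.x v w) = DV.y v w) :
    Inv n (Function.update σ (DV.base v) (DV.x v w)) (Function.update π v w)
      (BVal n (Function.update π v w)) := by
  set π' := Function.update π v w with hπ
  have pv : π' v = w := by simp [hπ]
  have pn : ∀ u, u ≠ v → π' u = π u := fun u hu => by simp [hπ, hu]
  have he : ∀ u, IsBVertex n u → BEdge n u (π' u) := by
    intro u hu
    by_cases huv : u = v
    · rw [huv, pv]; exact e.1
    · rw [pn u huv]; exact h.e u hu
  have hW : ∀ u, IsBVertex n u → W u ≤ rB n u (π' u) + W (π' u) := by
    intro u hu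
    by_cases huv : u = v
    · rw [huv, pv]; unfold cst at hc; linarith
    · rw [pn u huv]
      by_cases hs : u = BV.s
      · subst hs
        have e := h.e BV.s trivial
        have hps : π BV.s = BV.s := by simpa [BEdge] using e
        rw [hps, r_s]; simp
      · exact (h.w u hu hs).le
  have hpr := proper_of he hW
  have hw : ∀ u, IsBVertex n u → u ≠ BV.s → BVal n π' u = rB n u (π' u) + BVal n π' (π' u) :=
    fun u hu hs => BVal_eq (hpr u hu) hs
  refine ⟨he, hpr, BVal_s n _, hw, ?_, ?_, ?_, ?_, ?_, ?_⟩
  · intro u hu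
    refine le_trans (h.nn u hu) ?_
    revert u
    refine path_ind he hpr (fun u => W u ≤ BVal n π' u) (by rw [BVal_s, h.w0]) ?_
    intro u hu hs ih
    rw [hw u hu hs]
    exact (hW u hu).trans (by linarith)
  · intro u hu hs
    by_cases huv : u = v
    · subst huv; rw [Function.update_self, pv]
    · rw [Function.update_of_ne (by simpa using huv), pn u huv, h.sb u hu hs]
  · intro u hu hs
    rw [Function.update_of_ne (by simp)]
    by_cases huv : u = v
    · rw [huv, pv, hx]
    · rw [pn u huv, h.sx u hu hs]
  · intro u u' e'
    rw [Function.update_of_ne (by simp)]; exact h.sxx u u' e'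
  · intro u u' e'
    rw [Function.update_of_ne (by simp)]; exact h.sz u u' e'
  · rw [Function.update_of_ne (by simpa using e.2.symm)]; exact h.ss

lemma Inv.stutter_base (h : Inv n σ π W) {v w : BV} (hw : w ≠ π v) :
    Inv n (Function.update σ (DV.x v w) (DV.base v)) π W := by
  refine ⟨h.e, h.pr, h.w0, h.w, h.nn, ?_, ?_, ?_, ?_, ?_⟩
  · intro u hu hs
    rw [Function.update_of_ne (by simp), h.sb u hu hs]
  · intro u hu hs
    rw [Function.update_of_ne, h.sx u hu hs]
    intro heq
    injection heq with h1 h2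
    subst h1
    exact hw h2.symm
  · intro u u' e'
    by_cases hh : DV.x u u' = DV.x v w
    · left; rw [hh, Function.update_self]; injection hh with h1 h2; rw [h1]
    · rw [Function.update_of_ne hh]; exact h.sxx u u' e'
  · intro u u' e'
    rw [Function.update_of_ne (by simp)]; exact h.sz u u' e'
  · rw [Function.update_of_ne (by simp)]; exact h.ss

lemma Inv.stutter_y (h : Inv n σ π W) {v w : BV} :
    Inv n (Function.update σ (DV.x v w) (DV.y v w)) π W := by
  refine ⟨h.e, h.pr, h.w0, h.w, h.nn, ?_, ?_, ?_, ?_, ?_⟩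
  · intro u hu hs
    rw [Function.update_of_ne (by simp), h.sb u hu hs]
  · intro u hu hs
    by_cases hh : DV.x u (π u) = DV.x v w
    · rw [hh, Function.update_self]; injection hh with h1 h2; rw [h2, h1]
    · rw [Function.update_of_ne hh, h.sx u hu hs]
  · intro u u' e'
    by_cases hh : DV.x u u' = DV.x v w
    · right; rw [hh, Function.update_self]; injection hh with h1 h2; rw [h1, h2]
    · rw [Function.update_of_ne hh]; exact h.sxx u u' e'
  · intro u u' e'
    rw [Function.update_of_ne (by simp)]; exact h.sz u u' e'
  · rw [Function.update_of_ne (by simp)]; exact h.ss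

/-- Decoding. -/
def dT : BV → ℕ
  | BV.a i => i
  | _ => 0

def dA : BV → Ctr.Act
  | BV.b _ => Ctr.Act.e
  | BV.t => Ctr.Act.b
  | _ => Ctr.Act.s

def dB : BV → Bool
  | BV.b _ => true
  | BV.d => true
  | _ => false

/-- The counter state of a policy of `𝔅_n`. -/
def st (n : ℕ) (π : BV → BV) (W : BV → ℚ) : Ctr.St where
  τ := dT (π BV.t)
  α := fun i => dA (π (BV.a i))
  β := fun i => dB (π (BV.b i))
  T := W BV.t
  A := fun i => W (aN n i)
  B := fun i => W (bN n i)

def tA (n i : ℕ) : Ctr.Act → BV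
  | Ctr.Act.e => BV.b i
  | Ctr.Act.s => aN n (i + 1)
  | Ctr.Act.b => BV.t

def tB (n i : ℕ) : Bool → BV
  | true => bN n (i + 1)
  | false => aN n (i + 1)

lemma dA_tA (n i : ℕ) (c : Ctr.Act) : dA (tA n i c) = c := by
  cases c <;> simp only [tA]
  · rfl
  · unfold aN; split_ifs <;> rfl
  · rfl

lemma dB_tB (n i : ℕ) (c : Bool) : dB (tB n i c) = c := by
  cases c <;> simp only [tB]
  · unfold aN; split_ifs <;> rfl
  · unfold bN; split_ifs <;> rfl

lemma aN_le {n i : ℕ} (h : i ≤ n) : aN n i = BV.a i := by unfold aN; rw [if_neg (by omega)]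
lemma bN_le {n i : ℕ} (h : i ≤ n) : bN n i = BV.b i := by unfold bN; rw [if_neg (by omega)]

lemma edge_t {n : ℕ} {w : BV} (h : BEdge n BV.t w) : ∃ i, 1 ≤ i ∧ i ≤ n ∧ w = BV.a i := by
  simpa [BEdge] using h

lemma edge_a {n i : ℕ} {w : BV} (h : BEdge n (BV.a i) w) :
    1 ≤ i ∧ i ≤ n ∧ ∃ c, w = tA n i c := by
  have hv := edge_src h
  refine ⟨hv.1, hv.2, ?_⟩
  rcases h with ⟨j, h1, h2, h, _⟩ | ⟨j, h1, h2, h, h'⟩ | ⟨j, h1, h2, h, h'⟩ |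
    ⟨j, h1, h2, h, h'⟩ | ⟨j, h1, h2, h, _⟩ | ⟨j, h1, h2, h, _⟩ | ⟨h, _⟩ | ⟨h, _⟩ <;>
    cases h
  · exact ⟨Ctr.Act.e, h'⟩
  · exact ⟨Ctr.Act.s, h'⟩
  · exact ⟨Ctr.Act.b, h'⟩

lemma edge_b {n i : ℕ} {w : BV} (h : BEdge n (BV.b i) w) :
    1 ≤ i ∧ i ≤ n ∧ ∃ c, w = tB n i c := by
  have hv := edge_src h
  refine ⟨hv.1, hv.2, ?_⟩
  rcases h with ⟨j, h1, h2, h, _⟩ | ⟨j, h1, h2, h, h'⟩ | ⟨j, h1, h2, h, h'⟩ |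
    ⟨j, h1, h2, h, h'⟩ | ⟨j, h1, h2, h, h'⟩ | ⟨j, h1, h2, h, h'⟩ | ⟨h, _⟩ | ⟨h, _⟩ <;>
    cases h
  · exact ⟨true, h'⟩
  · exact ⟨false, h'⟩

lemma mk_t {n j : ℕ} (h1 : 1 ≤ j) (h2 : j ≤ n) : DEdgePair n BV.t (BV.a j) :=
  ⟨Or.inl ⟨j, h1, h2, rfl, rfl⟩, by simp⟩

lemma mk_a {n i : ℕ} (h1 : 1 ≤ i) (h2 : i ≤ n) (c : Ctr.Act) : DEdgePair n (BV.a i) (tA n i c) := by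
  refine ⟨?_, by simp⟩
  cases c
  · exact Or.inr (Or.inl ⟨i, h1, h2, rfl, rfl⟩)
  · exact Or.inr (Or.inr (Or.inl ⟨i, h1, h2, rfl, rfl⟩))
  · exact Or.inr (Or.inr (Or.inr (Or.inl ⟨i, h1, h2, rfl, rfl⟩)))

lemma mk_b {n i : ℕ} (h1 : 1 ≤ i) (h2 : i ≤ n) (c : Bool) : DEdgePair n (BV.b i) (tB n i c) := by
  refine ⟨?_, by simp⟩
  cases c
  · exact Or.inr (Or.inr (Or.inr (Or.inr (Or.inr (Or.inl ⟨i, h1, h2, rfl, rfl⟩)))))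
  · exact Or.inr (Or.inr (Or.inr (Or.inr (Or.inl ⟨i, h1, h2, rfl, rfl⟩))))

lemma av_st {n i : ℕ} (h2 : i ≤ n) (π : BV → BV) (W : BV → ℚ) (c : Ctr.Act) :
    Ctr.av (st n π W) i c = rB n (BV.a i) (tA n i c) + W (tA n i c) := by
  cases c <;> simp only [Ctr.av, tA, st]
  · rw [r_enter, bN_le h2]
  · rw [r_skip]; ring
  · rw [r_board]; ring

lemma bv_st {n i : ℕ} (π : BV → BV) (W : BV → ℚ) (c : Bool) :
    Ctr.bv (st n π W) i c = rB n (BV.b i) (tB n i c) + W (tB n i c) := by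
  cases c <;> simp only [Ctr.bv, tB, st]
  · rw [r_leave]; ring
  · rw [r_stay]

lemma cst_t {n j : ℕ} (h2 : j ≤ n) (π : BV → BV) (W : BV → ℚ) :
    cst n W BV.t (BV.a j) = (st n π W).A j - (st n π W).T := by
  simp only [cst, r_travel, st, aN_le h2]; ring

lemma cst_a {n i : ℕ} (h2 : i ≤ n) (π : BV → BV) (W : BV → ℚ) (c : Ctr.Act) :
    cst n W (BV.a i) (tA n i c) = Ctr.av (st n π W) i c - (st n π W).A i := by
  rw [av_st h2]; simp only [cst, st, aN_le h2]

lemma cst_b {n i : ℕ} (h2 : i ≤ n) (π : BV → BV) (W : BV → ℚ) (c : Bool) :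
    cst n W (BV.b i) (tB n i c) = Ctr.bv (st n π W) i c - (st n π W).B i := by
  rw [bv_st]; simp only [cst, st, bN_le h2]

lemma Inv.d_eq (h : Inv n σ π W) : W BV.d = 0 := by
  have e := h.e BV.d trivial
  have hps : π BV.d = BV.s := by simpa [BEdge] using e
  rw [h.w BV.d trivial (by simp), hps, r_d, h.w0]; simp

lemma Inv.ok (h : Inv n σ π W) : Ctr.Ok n (st n π W) := by
  obtain ⟨j, j1, j2, hj⟩ := edge_t (h.e BV.t trivial)
  have hτ : (st n π W).τ = j := by simp [st, hj, dT]
  refine ⟨by rw [hτ]; exact j1, by rw [hτ]; exact j2, ?_, ?_, ?_, ?_, ?_⟩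
  · rw [hτ]
    have := h.cst_self (v := BV.t) trivial (by simp)
    rw [hj, cst_t j2 π] at this
    linarith
  · simp [st, aN, h.w0]
  · simp [st, bN, h.d_eq]
  · intro i i1 i2
    obtain ⟨_, _, c, hc⟩ := edge_a (h.e (BV.a i) ⟨i1, i2⟩)
    have hα : (st n π W).α i = c := by simp only [st]; rw [hc, dA_tA]
    have := h.cst_self (v := BV.a i) ⟨i1, i2⟩ (by simp)
    rw [hc, cst_a i2 π] at this
    rw [hα]; linarith
  · intro i i1 i2
    obtain ⟨_, _, c, hc⟩ := edge_b (h.e (BV.b i) ⟨i1, i2⟩)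
    have hβ : (st n π W).β i = c := by simp only [st]; rw [hc, dB_tB]
    have := h.cst_self (v := BV.b i) ⟨i1, i2⟩ (by simp)
    rw [hc, cst_b i2 π] at this
    rw [hβ]; linarith

lemma Inv.imp (h : Inv n σ π W) (hi : Ctr.Imp n (st n π W)) :
    ∃ u u', DImproving n (pSpec n) σ u u' := by
  suffices H : ∃ v w, DEdgePair n v w ∧ 0 < cst n W v w by
    obtain ⟨v, w, e, hc⟩ := H
    obtain ⟨u, u', h1, _⟩ := h.improving e hc
    exact ⟨u, u', h1⟩
  rcases hi with ⟨j, h1, h2, hlt⟩ | ⟨i, c, h1, h2, hlt⟩ | ⟨i, c, h1, h2, hlt⟩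
  · exact ⟨_, _, mk_t h1 h2, by rw [cst_t h2 π]; linarith⟩
  · exact ⟨_, _, mk_a h1 h2 c, by rw [cst_a h2 π]; linarith⟩
  · exact ⟨_, _, mk_b h1 h2 c, by rw [cst_b h2 π]; linarith⟩

lemma Inv.step (h : Inv n σ π W) {σ' : DV → DV} (hd : DantzigStep n (pSpec n) σ σ') :
    Inv n σ' π W ∨ ∃ π' W', Inv n σ' π' W' ∧ Ctr.Step n (st n π W) (st n π' W') := by
  obtain ⟨u, u', hi, hmax, rfl⟩ := hd
  obtain ⟨v, w, e, hcase⟩ := h.cases hi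
  rcases hcase with ⟨rfl, rfl, hx, hc, hz⟩ | ⟨rfl, rfl, hw⟩ | ⟨rfl, rfl⟩
  · right
    refine ⟨_, _, h.switch e hc hx, ?_⟩
    have M : ∀ v' w', DEdgePair n v' w' → 0 < cst n W v' w' →
        pSpec n v' * cst n W v' w' ≤ pSpec n v * cst n W v w := by
      intro v' w' e' hc'
      obtain ⟨a, b, hab, hz'⟩ := h.improving e' hc'
      have := hmax a b hab
      rwa [hz', hz] at this
    have M1 : ∀ v' w', DEdgePair n v' w' → NV n v' < NV n v → cst n W v' w' ≤ 0 := by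
      intro v' w' e' hlt
      by_contra hc'
      rw [not_le] at hc'
      have h1 := M v' w' e' hc'
      have h2 := p_ratio hlt
      have h3 := h.cst_ge e'.1 hc'
      have h4 := h.cst_lt e.1
      have h5 := pos n v
      have h6 := pos n v'
      have h7 : pSpec n v * cst n W v w < pSpec n v * 2 ^ (n + 3) :=
        mul_lt_mul_of_pos_left h4 h5
      have h8 : pSpec n v' * (1 / 4) ≤ pSpec n v' * cst n W v' w' :=
        mul_le_mul_of_nonneg_left h3 h6.le
      have h9 : (2 : ℚ) ^ (n + 5) = 4 * 2 ^ (n + 3) := by ring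
      rw [h9] at h2
      linarith
    have M2 : ∀ w', DEdgePair n v w' → cst n W v w' ≤ cst n W v w := by
      intro w' e'
      by_cases hc' : 0 < cst n W v w'
      · exact le_of_mul_le_mul_left (M v w' e' hc') (pos n v)
      · linarith
    have oT : 1 < NV n v → Ctr.OptT n (st n π W) := by
      intro hv j j1 j2
      have := M1 BV.t (BV.a j) (mk_t j1 j2) hv
      rw [cst_t j2 π] at this; linarith
    have oA : ∀ l, 1 ≤ l → l ≤ n → 2 * l < NV n v → Ctr.OptA (st n π W) l := by
      intro l l1 l2 hv c
      have := M1 (BV.a l) _ (mk_a l1 l2 c) hv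
      rw [cst_a l2 π] at this; linarith
    have oB : ∀ l, 1 ≤ l → l ≤ n → 2 * l + 1 < NV n v → Ctr.OptB (st n π W) l := by
      intro l l1 l2 hv c
      have := M1 (BV.b l) _ (mk_b l1 l2 c) hv
      rw [cst_b l2 π] at this; linarith
    cases v with
    | t =>
      obtain ⟨j, j1, j2, rfl⟩ := edge_t e.1
      rw [cst_t j2 π] at hc
      refine Ctr.Step.t j j1 j2 (by linarith) ?_ ?_ ?_ ?_
      · intro i i1 i2
        have := M2 (BV.a i) (mk_t i1 i2)
        rw [cst_t j2 π, cst_t i2 π] at this; linarith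
      · simp [st, dT]
      · simp [st]
      · simp [st]
    | a i =>
      obtain ⟨i1, i2, c, rfl⟩ := edge_a e.1
      rw [cst_a i2 π] at hc
      simp only [NV] at oT oA oB
      refine Ctr.Step.a i c i1 i2 (oT (by omega)) ?_ (by linarith) ?_ ?_ ?_ ?_
      · intro l l1 l2
        exact ⟨oA l l1 (by omega) (by omega), oB l l1 (by omega) (by omega)⟩
      · intro c'
        have := M2 _ (mk_a i1 i2 c')
        rw [cst_a i2 π, cst_a i2 π] at this; linarith
      · simp [st]
      · funext l
        by_cases hl : l = i
        · subst hl; simp [st, dA_tA]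
        · simp [st, hl]
      · simp [st]
    | b i =>
      obtain ⟨i1, i2, c, rfl⟩ := edge_b e.1
      rw [cst_b i2 π] at hc
      simp only [NV] at oT oA oB
      refine Ctr.Step.b i c i1 i2 (oT (by omega)) ?_ (oA i i1 i2 (by omega)) (by linarith)
        ?_ ?_ ?_ ?_
      · intro l l1 l2
        exact ⟨oA l l1 (by omega) (by omega), oB l l1 (by omega) (by omega)⟩
      · intro c'
        have := M2 _ (mk_b i1 i2 c')
        rw [cst_b i2 π, cst_b i2 π] at this; linarith
      · simp [st]
      · simp [st]
      · funext l
        by_cases hl : l = i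
        · subst hl; simp [st, dB_tB]
        · simp [st, hl]
    | d =>
      exfalso
      have hw : w = BV.s := by simpa [BEdge] using e.1
      rw [hw] at hc
      simp [cst, r_d, h.w0, h.d_eq] at hc
    | s => exact absurd rfl e.2
  · left; exact h.stutter_base hw
  · left; exact h.stutter_y

lemma run {n m : ℕ} {f : ℕ → (DV → DV)}
    (hstep : ∀ k < m, DantzigStep n (pSpec n) (f k) (f (k + 1)))
    (hterm : ∀ u u', ¬ DImproving n (pSpec n) (f m) u u') :
    ∀ d k, k + d = m → ∀ π W c, Inv n (f k) π W → Ctr.Must n c (st n π W) → c ≤ d := by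
  intro d
  induction d with
  | zero =>
    intro k hk π W c hI hM
    have : k = m := by omega
    subst this
    cases hM with
    | zero => exact le_rfl
    | succ c _ hi _ =>
      obtain ⟨u, u', hu⟩ := hI.imp hi
      exact absurd hu (hterm u u')
  | succ d ih =>
    intro k hk π W c hI hM
    rcases hI.step (hstep k (by omega)) with hI' | ⟨π', W', hI', hs⟩
    · exact (ih (k + 1) (by omega) π W c hI' hM).trans (by omega)
    · cases hM with
      | zero => omega
      | succ c _ hi hh =>
        have := ih (k + 1) (by omega) π' W' c hI' (hh _ hI'.ok hs)
        omega

lemma pi0_edge {n : ℕ} (hn : 1 ≤ n) : ∀ v, IsBVertex n v → BEdge n v (pi0 n v) := by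
  intro v hv
  cases v with
  | t => exact (mk_t le_rfl hn).1
  | s => exact Or.inr (Or.inr (Or.inr (Or.inr (Or.inr (Or.inr (Or.inr ⟨rfl, rfl⟩))))))
  | d => exact Or.inr (Or.inr (Or.inr (Or.inr (Or.inr (Or.inr (Or.inl ⟨rfl, rfl⟩))))))
  | a i => exact (mk_a hv.1 hv.2 Ctr.Act.s).1
  | b i => exact (mk_b hv.1 hv.2 false).1

lemma pi0_r (n : ℕ) (v : BV) : rB n v (pi0 n v) = 0 := by
  cases v with
  | t => exact r_travel n 1
  | s => exact r_s n
  | d => exact r_d n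
  | a i => exact r_skip n i
  | b i => exact r_leave n i

lemma inv_start {n : ℕ} (hn : 1 ≤ n) : Inv n (twin (pi0 n)) (pi0 n) (fun _ => 0) := by
  have he := pi0_edge hn
  refine ⟨he, proper_of (W := fun _ => 0) he (fun v _ => by rw [pi0_r]; simp), rfl, ?_, ?_, ?_, ?_,
    ?_, ?_, ?_⟩
  · intro v _ _; rw [pi0_r]; simp
  · intro v _; exact le_rfl
  · intro v _ hs; simp [twin, hs]
  · intro v _ hs; simp [twin]
  · intro v w _
    simp only [twin]
    split_ifs <;> simp
  · intro v w _; simp [twin]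
  · simp [twin]

end Link

theorem stmt18 (n : ℕ) (hn : 1 ≤ n)
    (f : ℕ → (DV → DV)) (m : ℕ)
    (h0 : f 0 = twin (pi0 n))
    (hstep : ∀ k < m, DantzigStep n (pSpec n) (f k) (f (k + 1)))
    (hterm : ∀ u u', ¬ DImproving n (pSpec n) (f m) u u') :
    2 ^ n - 1 ≤ m := by
  have hI := Link.inv_start hn
  refine Link.run hstep hterm m 0 (by omega) (pi0 n) (fun _ => 0) _ (by rw [h0]; exact hI) ?_
  refine Ctr.main hI.ok ⟨rfl, ⟨by omega, by omega⟩, by omega, ?_, ?_⟩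
  · intro i _ _
    exact Link.dA_tA n i Ctr.Act.s
  · intro i _ _
    exact Link.dB_tB n i false
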